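/- arXiv:2501.13143 — 9 statements merged into one kernel-verified Lean document; each statement's English description precedes it below -/
import Mathlib

section
/- Let S be a nonempty finite set, ν a capacity on S, and n ≥ 1 a natural number. Then Δ_B ν(A) ≥ 0 for all A, B ⊆ S with B nonempty and |B| ≤ n if and only if ν is n-monotone, i.e., for every family of sets A₁, …, Aₙ ⊆ S one has ν(⋃_{i=1}^n A_i) ≥ ∑_{∅ ≠ I ⊆ {1,…,n}} (−1)^{|I|+1} ν(⋂_{i ∈ I} A_i). -/
/-!
Removing pieces `a i` from an element `u` one after the other, and taking the difference at each
step, gives the successive difference `∑ I, (-1) ^ |I| f (u \ ⨆ i ∈ I, a i)`. Both sides of the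
equivalence say that successive differences of `ν` are nonnegative: the derivative `Δ_B ν(A)`
removes the single points of `B` from `A ∪ B`, while the `n`-monotonicity inequality for a family
`A i` with union `U` removes the `n` sets `U \ A i` from `U`.

Removing a set amounts to removing its points one at a time, and removing a piece twice is the same
as removing it once. The first fact reduces differences along sets to derivatives. The second allows
the points of `B` to be listed with repetitions, as a family of exactly `n` pieces.
-/

section SuccessiveDifferences

open Finset

variable {α ι κ G Ω : Type*}

/-- The backward difference `f u - f (u \ a)` obtained by removing `a` from `u`. -/
def bwdDiff [SDiff α] [Sub G] (a : α) (f : α → G) (u : α) : G := f u - f (u \ a)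

/-- The successive difference of `f` at `u` along the family `a i`, `i ∈ s`, in closed form: the
composite of the operators `bwdDiff (a i)`, as `iterBwdDiff_insert` shows. -/
def iterBwdDiff [GeneralizedBooleanAlgebra α] [AddCommGroup G] (s : Finset ι) (a : ι → α)
    (f : α → G) (u : α) : G :=
  ∑ I ∈ s.powerset, (-1) ^ #I • f (u \ I.sup a)

/-- The derivative `Δ_B f (A)` of a set function. -/
def setDerivative [DecidableEq Ω] [AddCommGroup G] (B : Finset Ω) (f : Finset Ω → G)
    (A : Finset Ω) : G :=
  ∑ C ∈ B.powerset, (-1) ^ #(B \ C) • f ((A \ B) ∪ C)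

/-- `n`-monotonicity of a function on a lattice. Intersections are taken as `Finset.inf'` over
nonempty index sets, so that no greatest element is needed. -/
def NMonotone [Lattice α] [OrderBot α] [AddCommGroup G] [LE G] (n : ℕ) (f : α → G) : Prop :=
  ∀ a : Fin n → α,
    ∑ I : univ.powerset.filter (·.Nonempty), (-1) ^ (#I.1 + 1) • f (I.1.inf' (mem_filter.1 I.2).2 a)
      ≤ f (univ.sup a)

section GeneralizedBooleanAlgebra

variable [GeneralizedBooleanAlgebra α] [AddCommGroup G]

@[simp]
theorem bwdDiff_bot (f : α → G) : bwdDiff ⊥ f = 0 := by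
  ext u
  simp [bwdDiff]

theorem bwdDiff_sup (a b : α) (f : α → G) :
    bwdDiff (a ⊔ b) f = bwdDiff a f + fun u ↦ bwdDiff b f (u \ a) := by
  ext u
  simp [bwdDiff, sdiff_sdiff_left]

theorem bwdDiff_bwdDiff_self (a : α) (f : α → G) : bwdDiff a (bwdDiff a f) = bwdDiff a f := by
  ext u
  simp [bwdDiff]

@[simp]
theorem iterBwdDiff_empty (a : ι → α) (f : α → G) : iterBwdDiff ∅ a f = f := by
  ext u
  simp [iterBwdDiff]

@[simp]
theorem iterBwdDiff_zero (s : Finset ι) (a : ι → α) : iterBwdDiff s a (0 : α → G) = 0 := by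
  ext u
  simp [iterBwdDiff]

theorem iterBwdDiff_add (s : Finset ι) (a : ι → α) (f g : α → G) :
    iterBwdDiff s a (f + g) = iterBwdDiff s a f + iterBwdDiff s a g := by
  ext u
  simp [iterBwdDiff, sum_add_distrib]

theorem iterBwdDiff_comp_sdiff (s : Finset ι) (a : ι → α) (f : α → G) (b u : α) :
    iterBwdDiff s a (fun v ↦ f (v \ b)) u = iterBwdDiff s a f (u \ b) := by
  simp only [iterBwdDiff, sdiff_right_comm]

theorem iterBwdDiff_bwdDiff (s : Finset ι) (a : ι → α) (f : α → G) (b u : α) :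
    iterBwdDiff s a (bwdDiff b f) u = iterBwdDiff s a f u - iterBwdDiff s a f (u \ b) := by
  simp only [iterBwdDiff, bwdDiff, smul_sub, sum_sub_distrib, sdiff_right_comm]

theorem iterBwdDiff_insert [DecidableEq ι] {s : Finset ι} {i : ι} (hi : i ∉ s) (a : ι → α)
    (f : α → G) : iterBwdDiff (insert i s) a f = iterBwdDiff s a (bwdDiff (a i) f) := by
  ext u
  rw [iterBwdDiff_bwdDiff, iterBwdDiff, sum_powerset_insert hi, sub_eq_add_neg]
  refine congrArg (_ + ·) ?_
  rw [iterBwdDiff, ← sum_neg_distrib]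
  refine sum_congr rfl fun I hI ↦ ?_
  have hiI : i ∉ I := fun h ↦ hi (mem_powerset.1 hI h)
  simp [card_insert_of_notMem hiI, sdiff_sdiff_left, pow_succ]

theorem iterBwdDiff_bwdDiff_of_mem {s : Finset ι} {i : ι} (hi : i ∈ s) (a : ι → α) (f : α → G) :
    iterBwdDiff s a (bwdDiff (a i) f) = iterBwdDiff s a f := by
  classical
  rw [← insert_erase hi, iterBwdDiff_insert (notMem_erase i s),
    iterBwdDiff_insert (notMem_erase i s), bwdDiff_bwdDiff_self]

theorem iterBwdDiff_image [DecidableEq ι] (s : Finset κ) (g : κ → ι) (a : ι → α) (f : α → G) :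
    iterBwdDiff (s.image g) a f = iterBwdDiff s (a ∘ g) f := by
  classical
  induction s using Finset.induction_on generalizing f with
  | empty => simp
  | insert k s hk ih =>
    rw [image_insert, iterBwdDiff_insert hk, ← ih, Function.comp_apply]
    by_cases hg : g k ∈ s.image g
    · rw [insert_eq_of_mem hg, iterBwdDiff_bwdDiff_of_mem hg]
    · rw [iterBwdDiff_insert hg]

theorem iterBwdDiff_eq_zero_of_disjoint {s : Finset ι} {i : ι} (hi : i ∈ s) {a : ι → α} {u : α}
    (hu : Disjoint u (a i)) (f : α → G) : iterBwdDiff s a f u = 0 := by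
  rw [← iterBwdDiff_bwdDiff_of_mem hi, iterBwdDiff_bwdDiff, hu.sdiff_eq_left, sub_self]

theorem sdiff_sup_eq_inf'_sdiff {s : Finset ι} (hs : s.Nonempty) (a : ι → α) (u : α) :
    u \ s.sup a = s.inf' hs (fun i ↦ u \ a i) := by
  induction hs using Finset.Nonempty.cons_induction with
  | singleton i => simp
  | cons i s hi hs ih => rw [sup_cons, sdiff_sup, ih, inf'_cons hs]

theorem iterBwdDiff_eq_sub_sum_inf' (s : Finset ι) (a : ι → α) (f : α → G) (u : α) :
    iterBwdDiff s a f u =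
      f u - ∑ I : s.powerset.filter (·.Nonempty),
        (-1) ^ (#I.1 + 1) • f (I.1.inf' (mem_filter.1 I.2).2 fun i ↦ u \ a i) := by
  have h_empty : s.powerset.filter (¬ ·.Nonempty) = {∅} := by
    ext I
    simp +contextual [iff_def]
  rw [iterBwdDiff, ← sum_filter_not_add_sum_filter _ (·.Nonempty), h_empty, sub_eq_add_neg,
    ← sum_neg_distrib, ← sum_coe_sort (s.powerset.filter _)]
  congr 1
  · simp
  · refine sum_congr rfl fun I _ ↦ ?_
    simp [← sdiff_sup_eq_inf'_sdiff, pow_succ]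

theorem nMonotone_iff_iterBwdDiff_nonneg [PartialOrder G] [IsOrderedAddMonoid G] {n : ℕ}
    {f : α → G} (hf : Monotone f) :
    NMonotone n f ↔ ∀ (a : Fin n → α) (u : α), 0 ≤ iterBwdDiff univ a f u := by
  simp only [iterBwdDiff_eq_sub_sum_inf', sub_nonneg]
  refine ⟨fun h a u ↦ (h fun i ↦ u \ a i).trans (hf <| Finset.sup_le fun i _ ↦ sdiff_le),
    fun h a ↦ ?_⟩
  have h_sdiff (i : Fin n) : univ.sup a \ (univ.sup a \ a i) = a i :=
    sdiff_sdiff_eq_self (le_sup (mem_univ i))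
  simpa only [h_sdiff] using h (fun i ↦ univ.sup a \ a i) (univ.sup a)

end GeneralizedBooleanAlgebra

section SetFunction

variable [DecidableEq Ω] [AddCommGroup G]

theorem setDerivative_eq_iterBwdDiff (A B : Finset Ω) (f : Finset Ω → G) :
    setDerivative B f A = iterBwdDiff B singleton f (A ∪ B) := by
  refine sum_nbij' (B \ ·) (B \ ·) (by simp) (by simp) (by simp) (by simp) fun C hC ↦ ?_
  have hCB : C ⊆ B := mem_powerset.1 hC
  have h_union : A \ B ∪ C = (A ∪ B) \ (B \ C) := by grind
  rw [sup_singleton_eq_self, h_union]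

variable [PartialOrder G]

theorem setDerivative_nonneg_iff_iterBwdDiff_singleton_nonneg {B : Finset Ω} {f : Finset Ω → G} :
    (∀ A, 0 ≤ setDerivative B f A) ↔ ∀ U, 0 ≤ iterBwdDiff B singleton f U := by
  simp only [setDerivative_eq_iterBwdDiff]
  refine ⟨fun h U ↦ ?_, fun h A ↦ h (A ∪ B)⟩
  by_cases hBU : B ⊆ U
  · simpa [union_eq_left.2 hBU] using h U
  · obtain ⟨x, hxB, hxU⟩ := not_subset.1 hBU
    exact (iterBwdDiff_eq_zero_of_disjoint hxB (disjoint_singleton_right.2 hxU) f).ge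

variable [IsOrderedAddMonoid G]

theorem iterBwdDiff_singleton_bwdDiff_nonneg {k : ℕ} {f : Finset Ω → G}
    (hf : ∀ B : Finset Ω, B.Nonempty → #B ≤ k + 1 → ∀ U, 0 ≤ iterBwdDiff B singleton f U)
    (N : Finset Ω) {B : Finset Ω} (hB : #B ≤ k) (U : Finset Ω) :
    0 ≤ iterBwdDiff B singleton (bwdDiff N f) U := by
  induction N using Finset.induction_on generalizing U with
  | empty => simp [← bot_eq_empty]
  | insert x N _ ih =>
    have h_point : 0 ≤ iterBwdDiff B singleton (bwdDiff {x} f) U := by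
      by_cases hxB : x ∈ B
      · rw [iterBwdDiff_bwdDiff_of_mem hxB]
        exact hf B ⟨x, hxB⟩ (by lia) U
      · rw [← iterBwdDiff_insert hxB]
        exact hf _ (insert_nonempty x B) (by grind) U
    rw [insert_eq, ← sup_eq_union, bwdDiff_sup, iterBwdDiff_add, Pi.add_apply,
      iterBwdDiff_comp_sdiff]
    exact add_nonneg h_point (ih (U \ {x}))

theorem iterBwdDiff_nonneg_of_singleton {s : Finset ι} (hs : s.Nonempty) {f : Finset Ω → G}
    (hf : ∀ B : Finset Ω, B.Nonempty → #B ≤ #s → ∀ U, 0 ≤ iterBwdDiff B singleton f U)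
    (N : ι → Finset Ω) (U : Finset Ω) : 0 ≤ iterBwdDiff s N f U := by
  classical
  induction hs using Finset.Nonempty.cons_induction generalizing f with
  | singleton i =>
    rw [← insert_empty_eq, iterBwdDiff_insert (notMem_empty i), iterBwdDiff_empty]
    simpa using iterBwdDiff_singleton_bwdDiff_nonneg (k := 0) hf (N i) card_empty.le U
  | cons i s hi _ ih =>
    rw [cons_eq_insert, iterBwdDiff_insert hi]
    rw [card_cons] at hf
    exact ih fun B _ hB U ↦ iterBwdDiff_singleton_bwdDiff_nonneg hf (N i) hB U

theorem exists_image_univ_eq [Fintype ι] {B : Finset Ω} (hB : B.Nonempty)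
    (hcard : #B ≤ Fintype.card ι) : ∃ g : ι → Ω, univ.image g = B := by
  have h_emb : Nonempty (B ↪ ι) := Function.Embedding.nonempty_of_card_le (by simpa using hcard)
  have := hB.to_subtype
  obtain ⟨g, hg⟩ := Function.exists_surjective_iff.2 ⟨inferInstance, h_emb⟩
  refine ⟨(↑) ∘ g, ?_⟩
  rw [← image_image, image_univ_of_surjective hg, univ_eq_attach, attach_image_val]

theorem iterBwdDiff_singleton_nonneg_iff [Fintype ι] [Nonempty ι] {f : Finset Ω → G} :
    (∀ B : Finset Ω, B.Nonempty → #B ≤ Fintype.card ι → ∀ U, 0 ≤ iterBwdDiff B singleton f U) ↔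
      ∀ (N : ι → Finset Ω) (U : Finset Ω), 0 ≤ iterBwdDiff univ N f U := by
  refine ⟨iterBwdDiff_nonneg_of_singleton univ_nonempty, fun h B hB hcard U ↦ ?_⟩
  obtain ⟨g, rfl⟩ := exists_image_univ_eq hB hcard
  rw [iterBwdDiff_image]
  exact h _ U

theorem capacity_derivative_nonneg_iff_n_monotone_general {n : ℕ} (hn : n ≠ 0)
    {f : Finset Ω → G} (hf : Monotone f) :
    (∀ A B : Finset Ω, B.Nonempty → #B ≤ n → 0 ≤ setDerivative B f A) ↔ NMonotone n f := by
  have : NeZero n := ⟨hn⟩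
  calc (∀ A B : Finset Ω, B.Nonempty → #B ≤ n → 0 ≤ setDerivative B f A)
    _ ↔ ∀ B : Finset Ω, B.Nonempty → #B ≤ n → ∀ U, 0 ≤ iterBwdDiff B singleton f U := by
      simp only [← setDerivative_nonneg_iff_iterBwdDiff_singleton_nonneg]
      exact ⟨fun h B hB hBn A ↦ h A B hB hBn, fun h A B hB hBn ↦ h B hB hBn A⟩
    _ ↔ ∀ (N : Fin n → Finset Ω) (U : Finset Ω), 0 ≤ iterBwdDiff univ N f U := by
      rw [← iterBwdDiff_singleton_nonneg_iff, Fintype.card_fin]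
    _ ↔ NMonotone n f := (nMonotone_iff_iterBwdDiff_nonneg hf).symm

end SetFunction

end SuccessiveDifferences

/-- For a capacity ν on a nonempty finite set S and n ≥ 1,
Δ_B ν(A) ≥ 0 for all A, B ⊆ S with B nonempty and |B| ≤ n iff ν is n-monotone. -/
theorem capacity_derivative_nonneg_iff_n_monotone
    {Ω : Type*} [Fintype Ω] [DecidableEq Ω] [Nonempty Ω]
    (ν : Finset Ω → ℝ) (hν0 : ν ∅ = 0)
    (hmono : ∀ A B : Finset Ω, A ⊆ B → ν A ≤ ν B)
    (n : ℕ) (hn : 1 ≤ n) :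
    (∀ A B : Finset Ω, B.Nonempty → B.card ≤ n →
        0 ≤ ∑ C ∈ B.powerset, (-1 : ℝ) ^ ((B \ C).card) * ν ((A \ B) ∪ C)) ↔
    (∀ A : Fin n → Finset Ω,
        (∑ I ∈ (Finset.univ : Finset (Fin n)).powerset.filter
            (fun I : Finset (Fin n) => I.Nonempty),
          (-1 : ℝ) ^ (I.card + 1) * ν (I.inf A)) ≤ ν (Finset.univ.sup A)) := by
  have h := capacity_derivative_nonneg_iff_n_monotone_general (Nat.one_le_iff_ne_zero.1 hn) hmono
  simp only [setDerivative, NMonotone, Finset.inf'_eq_inf, zsmul_eq_mul, Int.cast_pow, Int.cast_neg,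
    Int.cast_one] at h
  simpa only [← Finset.sum_coe_sort (Finset.filter _ _)] using h
end

section
/- Let S be a finite set with at least two elements, ν a capacity on S with ν(S) = 1, and V the Choquet integral with respect to ν. If V is ambiguity averse, then Δ_{ω₁,ω₂}ν(A) ≥ 0 for every A ⊆ S and all distinct ω₁, ω₂ ∈ S. -/
open MeasureTheory

/-- The Choquet integral of a nonnegative profile `y` with respect to a capacity `ν`:
`V(y) = ∫₀^∞ ν({ω : y ω ≥ t}) dt`. -/
noncomputable def choquet {Ω : Type*} [Fintype Ω] (ν : Finset Ω → ℝ) (y : Ω → ℝ) : ℝ :=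
  ∫ t in Set.Ioi (0 : ℝ), ν (Finset.univ.filter fun ω => t ≤ y ω)

/-- Ambiguity aversion for a functional on nonnegative profiles over a finite state space. -/
def AmbiguityAverseC {Ω : Type*} [DecidableEq Ω] (V : (Ω → ℝ) → ℝ) : Prop :=
  ∀ (E : Finset Ω) (ω₁ ω₂ : Ω) (u₁ u₂ ub : ℝ) (y : Ω → ℝ),
    ω₁ ∉ E → ω₂ ∉ E → ω₁ ≠ ω₂ →
    u₁ < u₂ → 0 < ub → 2 * ub < u₂ - u₁ → 0 ≤ u₁ - ub →
    (∀ ω, 0 ≤ y ω) →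
    y ω₁ = u₁ → y ω₂ = u₂ →
    (∀ ω ∈ E, y ω < u₁ - ub) →
    (∀ ω, ω ∉ E → ω ≠ ω₁ → ω ≠ ω₂ → u₂ + ub < y ω) →
    V (Function.update (Function.update y ω₁ (u₁ + ub)) ω₂ (u₂ - ub)) ≥
      V (Function.update (Function.update y ω₁ (u₁ - ub)) ω₂ (u₂ + ub))

/-- Ambiguity prudence for a functional on nonnegative profiles over a finite state space. -/
def AmbiguityPrudentC {Ω : Type*} [DecidableEq Ω] (V : (Ω → ℝ) → ℝ) : Prop :=
  ∀ (E : Finset Ω) (ω₁ ω₂ ω₃ : Ω) (u₁ u₂ u₃ ub : ℝ) (y : Ω → ℝ),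
    ω₁ ∉ E → ω₂ ∉ E → ω₃ ∉ E →
    ω₁ ≠ ω₂ → ω₁ ≠ ω₃ → ω₂ ≠ ω₃ →
    u₁ < u₂ → u₂ < u₃ → u₂ - u₁ = u₃ - u₂ →
    0 < ub → 3 * ub < u₂ - u₁ → 0 ≤ u₁ - ub →
    (∀ ω, 0 ≤ y ω) →
    y ω₁ = u₁ → y ω₂ = u₂ → y ω₃ = u₃ →
    (∀ ω ∈ E, y ω < u₁ - ub) →
    (∀ ω, ω ∉ E → ω ≠ ω₁ → ω ≠ ω₂ → ω ≠ ω₃ → u₃ + ub < y ω) →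
    V (Function.update (Function.update (Function.update y ω₁ (u₁ + ub)) ω₂ (u₂ - 2 * ub)) ω₃ (u₃ + ub)) ≥
      V (Function.update (Function.update (Function.update y ω₁ (u₁ - ub)) ω₂ (u₂ + 2 * ub)) ω₃ (u₃ - ub))

/-- Second derivative of a set function. -/
def secondDeriv {Ω : Type*} [DecidableEq Ω] (ν : Finset Ω → ℝ) (ω₁ ω₂ : Ω) (A : Finset Ω) : ℝ :=
  ν (A ∪ {ω₁, ω₂}) - ν ((A ∪ {ω₁}) \ {ω₂}) - ν ((A ∪ {ω₂}) \ {ω₁}) + ν (A \ {ω₁, ω₂})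

/-- Third derivative of a set function. -/
def thirdDeriv {Ω : Type*} [DecidableEq Ω] (ν : Finset Ω → ℝ) (ω₁ ω₂ ω₃ : Ω) (A : Finset Ω) : ℝ :=
  ∑ C ∈ ({ω₁, ω₂, ω₃} : Finset Ω).powerset,
    (-1 : ℝ) ^ (3 - C.card) * ν ((A \ {ω₁, ω₂, ω₃}) ∪ C)

/-!
Raising the value of one state `p` from `a` to `b` without crossing the value of any other state
changes the level sets `{y ≥ t}` only for `t ∈ (a, b]`, and there only by adding `p`. So the
Choquet integral grows by `b - a` times the marginal contribution of `p` to the set `B` of states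
with higher values. For `p` below `q`, contracting the two values by `d` therefore gains
`2d` times the marginal contribution of `p` to `B ∪ {q}` and loses `2d` times that of `q` to `B`:
ambiguity aversion says that the former contribution is at least the latter. Averaging this
inequality with the one obtained by exchanging `p` and `q` gives nonnegativity of the second
derivative.
-/

section LevelSets

variable {Ω : Type*} [Fintype Ω]

lemma measurable_comp_upperLevel {β : Type*} [MeasurableSpace β] (f : Finset Ω → β) (y : Ω → ℝ) :
    Measurable fun t : ℝ => f (Finset.univ.filter fun ω => t ≤ y ω) := by
  let _ : MeasurableSpace (Finset Ω) := ⊤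
  have hlevel : Measurable fun t : ℝ => Finset.univ.filter fun ω => t ≤ y ω := by
    refine measurable_to_countable' fun S => ?_
    have hpre : (fun t : ℝ => Finset.univ.filter fun ω => t ≤ y ω) ⁻¹' {S} =
        ⋂ ω, {t : ℝ | t ≤ y ω ↔ ω ∈ S} := by
      ext t
      simp [Finset.ext_iff]
    rw [hpre]
    refine MeasurableSet.iInter fun ω => ?_
    exact (measurableSet_le measurable_id measurable_const).iff (MeasurableSet.const _)
  exact measurable_from_top.comp hlevel

lemma integrableOn_comp_upperLevel {ν : Finset Ω → ℝ} (hν0 : ν ∅ = 0) (y : Ω → ℝ) :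
    IntegrableOn (fun t : ℝ => ν (Finset.univ.filter fun ω => t ≤ y ω)) (Set.Ioi 0) := by
  obtain ⟨M, hM⟩ : ∃ M, ∀ ω, y ω ≤ M := Finite.exists_le y
  obtain ⟨C, hC⟩ : ∃ C, ∀ S, ‖ν S‖ ≤ C := Finite.exists_le fun S => ‖ν S‖
  have hbounded : IntegrableOn (fun t : ℝ => ν (Finset.univ.filter fun ω => t ≤ y ω))
      (Set.Ioc 0 M) :=
    Measure.integrableOn_of_bounded measure_Ioc_lt_top.ne
      (measurable_comp_upperLevel ν y).aestronglyMeasurable (ae_of_all _ fun _ => hC _)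
  refine hbounded.of_forall_sdiff_eq_zero measurableSet_Ioi fun t ht => ?_
  have hMt : M < t := by
    by_contra! htM
    exact ht.2 ⟨ht.1, htM⟩
  rw [Finset.filter_false_of_mem fun ω _ => not_le.mpr ((hM ω).trans_lt hMt), hν0]

end LevelSets

section ChoquetUpdate

open Function

variable {Ω : Type*} [Fintype Ω] [DecidableEq Ω] {ν : Finset Ω → ℝ}

lemma choquet_update_sub_choquet_update (hν0 : ν ∅ = 0) {y : Ω → ℝ} {p : Ω} {a b : ℝ}
    {B : Finset Ω} (hpB : p ∉ B) (ha : 0 ≤ a) (hab : a ≤ b) (hhigh : ∀ ω ∈ B, b ≤ y ω)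
    (hlow : ∀ ω ∉ B, ω ≠ p → y ω ≤ a) :
    choquet ν (update y p b) - choquet ν (update y p a) = (b - a) * (ν (insert p B) - ν B) := by
  have hdiff (t : ℝ) :
      ν (Finset.univ.filter fun ω => t ≤ update y p b ω) -
          ν (Finset.univ.filter fun ω => t ≤ update y p a ω) =
        (Set.Ioc a b).indicator (fun _ => ν (insert p B) - ν B) t := by
    by_cases ht : t ∈ Set.Ioc a b
    · have hlevel_b : (Finset.univ.filter fun ω => t ≤ update y p b ω) = insert p B := by
        ext ω
        grind [update_apply]
      have hlevel_a : (Finset.univ.filter fun ω => t ≤ update y p a ω) = B := by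
        ext ω
        grind [update_apply]
      rw [Set.indicator_of_mem ht, hlevel_b, hlevel_a]
    · have hlevel : (Finset.univ.filter fun ω => t ≤ update y p b ω) =
          Finset.univ.filter fun ω => t ≤ update y p a ω := by
        ext ω
        grind [update_apply]
      rw [Set.indicator_of_notMem ht, hlevel, sub_self]
  have hIoc : Set.Ioi 0 ∩ Set.Ioc a b = Set.Ioc a b :=
    Set.inter_eq_right.mpr fun _ ht => ha.trans_lt ht.1
  unfold choquet
  rw [← integral_sub (integrableOn_comp_upperLevel hν0 _) (integrableOn_comp_upperLevel hν0 _)]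
  simp only [hdiff]
  rw [setIntegral_indicator measurableSet_Ioc, hIoc, setIntegral_const, smul_eq_mul,
    Real.volume_real_Ioc_of_le hab]

lemma choquet_contraction_sub_choquet_spread (hν0 : ν ∅ = 0) {y : Ω → ℝ} {p q : Ω} {u v d : ℝ}
    {B : Finset Ω} (hpB : p ∉ B) (hqB : q ∉ B) (hpq : p ≠ q) (hd : 0 ≤ d) (hud : 0 ≤ u - d)
    (huv : u + d ≤ v - d) (hhigh : ∀ ω ∈ B, v + d ≤ y ω)
    (hlow : ∀ ω ∉ B, ω ≠ p → ω ≠ q → y ω ≤ u - d) :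
    choquet ν (update (update y p (u + d)) q (v - d)) -
        choquet ν (update (update y p (u - d)) q (v + d)) =
      2 * d * ((ν (insert p (insert q B)) - ν (insert q B)) - (ν (insert q B) - ν B)) := by
  have hraise_p : choquet ν (update (update y q (v + d)) p (u + d)) -
      choquet ν (update (update y q (v + d)) p (u - d)) =
        (u + d - (u - d)) * (ν (insert p (insert q B)) - ν (insert q B)) := by
    apply choquet_update_sub_choquet_update hν0 <;> grind [update_apply]
  have hlower_q : choquet ν (update (update y p (u + d)) q (v + d)) -
      choquet ν (update (update y p (u + d)) q (v - d)) =
        (v + d - (v - d)) * (ν (insert q B) - ν B) := by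
    apply choquet_update_sub_choquet_update hν0 <;> grind [update_apply]
  rw [update_comm hpq.symm, update_comm hpq.symm] at hraise_p
  linear_combination hraise_p - hlower_q

lemma AmbiguityAverseC.marginal_le_marginal_insert (hAA : AmbiguityAverseC (choquet ν))
    (hν0 : ν ∅ = 0) {B : Finset Ω} {p q : Ω} (hpB : p ∉ B) (hqB : q ∉ B) (hpq : p ≠ q) :
    ν (insert q B) - ν B ≤ ν (insert p (insert q B)) - ν (insert q B) := by
  let y : Ω → ℝ := fun ω => if ω = p then 2 else if ω = q then 5 else if ω ∈ B then 7 else 0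
  have haverse : choquet ν (update (update y p (2 + 1)) q (5 - 1)) ≥
      choquet ν (update (update y p (2 - 1)) q (5 + 1)) := by
    apply hAA (insert p (insert q B))ᶜ p q 2 5 1 y <;> grind [Finset.mem_compl]
  have hgain : choquet ν (update (update y p (2 + 1)) q (5 - 1)) -
      choquet ν (update (update y p (2 - 1)) q (5 + 1)) =
        2 * 1 * ((ν (insert p (insert q B)) - ν (insert q B)) - (ν (insert q B) - ν B)) := by
    apply choquet_contraction_sub_choquet_spread hν0 hpB hqB hpq <;> grind
  linarith

end ChoquetUpdate

lemma secondDeriv_eq_of_ne {Ω : Type*} [DecidableEq Ω] (ν : Finset Ω → ℝ) {p q : Ω}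
    (hpq : p ≠ q) (A : Finset Ω) :
    secondDeriv ν p q A =
      ν (insert p (insert q (A \ {p, q}))) - ν (insert p (A \ {p, q})) -
        ν (insert q (A \ {p, q})) + ν (A \ {p, q}) := by
  have hpair : A ∪ {p, q} = insert p (insert q (A \ {p, q})) := by grind
  have hleft : (A ∪ {p}) \ {q} = insert p (A \ {p, q}) := by grind
  have hright : (A ∪ {q}) \ {p} = insert q (A \ {p, q}) := by grind
  rw [secondDeriv, hpair, hleft, hright]

theorem CEU_ambiguityAverse_implies_secondDeriv_nonneg_general
    {Ω : Type*} [Fintype Ω] [DecidableEq Ω] (ν : Finset Ω → ℝ) (hν0 : ν ∅ = 0)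
    (hAA : AmbiguityAverseC (choquet ν)) (A : Finset Ω) (ω₁ ω₂ : Ω) (hne : ω₁ ≠ ω₂) :
    0 ≤ secondDeriv ν ω₁ ω₂ A := by
  have h₁ : ω₁ ∉ A \ {ω₁, ω₂} := by simp
  have h₂ : ω₂ ∉ A \ {ω₁, ω₂} := by simp
  have hmarginal₁₂ := hAA.marginal_le_marginal_insert hν0 h₁ h₂ hne
  have hmarginal₂₁ := hAA.marginal_le_marginal_insert hν0 h₂ h₁ hne.symm
  rw [Finset.insert_comm] at hmarginal₂₁
  rw [secondDeriv_eq_of_ne ν hne]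
  linarith

/-- If the Choquet integral of a capacity ν (with ν(S)=1) on a finite set with
at least two elements is ambiguity averse, then the second derivative of ν is nonnegative. -/
theorem CEU_ambiguityAverse_implies_secondDeriv_nonneg
    {Ω : Type*} [Fintype Ω] [DecidableEq Ω]
    (hcard : 2 ≤ Fintype.card Ω)
    (ν : Finset Ω → ℝ) (hν0 : ν ∅ = 0) (hν1 : ν Finset.univ = 1)
    (hmono : ∀ A B : Finset Ω, A ⊆ B → ν A ≤ ν B)
    (hAA : AmbiguityAverseC (choquet ν)) :
    ∀ (A : Finset Ω) (ω₁ ω₂ : Ω), ω₁ ≠ ω₂ → 0 ≤ secondDeriv ν ω₁ ω₂ A :=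
  CEU_ambiguityAverse_implies_secondDeriv_nonneg_general ν hν0 hAA
end

section
/- Let S be a finite set with at least three elements, ν a capacity on S with ν(S) = 1, and V the Choquet integral with respect to ν. Suppose V(y ∘ σ) = V(y) for every permutation σ of S and every nonnegative profile y : S → [0,∞) (the symmetry assumption), and suppose Δ_{ω₁,ω₂,ω₃}ν(A) ≥ 0 for every A ⊆ S and all distinct ω₁, ω₂, ω₃ ∈ S. Then V is ambiguity prudent. -/
open MeasureTheory

/-!
Moving the value of a single state `ω` from `a` to `b`, with no other value strictly between them,
changes the Choquet integral by `(b - a) * (ν (insert ω U) - ν U)`, where `U` consists of the states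
ranked above `ω`. Both perturbations in the definition of ambiguity prudence preserve the ranking
of the states, so they are the cases `δ = ub` and `δ = -ub` of one move
`(u₁ + δ, u₂ - 2δ, u₃ + δ)`, whose effect is `δ` times a combination of four values of `ν` along the
chain of upper sets. Testing symmetry on indicator profiles shows that `ν` depends only on
cardinality, and then this combination is exactly the third derivative of `ν`.
-/

section Choquet

variable {Ω : Type*} [Fintype Ω] {ν : Finset Ω → ℝ}

theorem measurable_comp_superlevel {β : Type*} [MeasurableSpace β] (f : Finset Ω → β)
    (y : Ω → ℝ) : Measurable fun t : ℝ => f {ω | t ≤ y ω} := by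
  let _ : MeasurableSpace (Finset Ω) := ⊤
  have superlevel_measurable : Measurable fun t : ℝ => ({ω | t ≤ y ω} : Finset Ω) := by
    refine measurable_to_countable' fun A => ?_
    have preimage_eq : (fun t : ℝ => ({ω | t ≤ y ω} : Finset Ω)) ⁻¹' {A}
        = {t | ∀ ω, t ≤ y ω ↔ ω ∈ A} := by
      ext t
      simp [Finset.ext_iff]
    rw [preimage_eq]
    measurability
  exact measurable_from_top.comp superlevel_measurable

theorem integrableOn_superlevel (hν : ν ∅ = 0) (y : Ω → ℝ) :
    IntegrableOn (fun t : ℝ => ν {ω | t ≤ y ω}) (Set.Ioi 0) := by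
  obtain ⟨M, hM⟩ := Finite.exists_le y
  obtain ⟨C, hC⟩ := Finite.exists_le fun A => ‖ν A‖
  have integrableOn_Ioc : IntegrableOn (fun t : ℝ => ν {ω | t ≤ y ω}) (Set.Ioc 0 M) :=
    Measure.integrableOn_of_bounded (by simp) (measurable_comp_superlevel ν y).aestronglyMeasurable
      (ae_of_all _ fun _ => hC _)
  refine integrableOn_Ioc.of_forall_sdiff_eq_zero measurableSet_Ioi fun t ht => ?_
  have hMt : M < t := by simpa [ht.1.out] using ht.2
  rw [Finset.filter_eq_empty_iff.2 fun ω _ => ((hM ω).trans_lt hMt).not_ge, hν]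

theorem setIntegral_Ioi_indicator_Ioc {a b : ℝ} (ha : 0 ≤ a) (hab : a ≤ b) (c : ℝ) :
    ∫ t in Set.Ioi (0 : ℝ), (Set.Ioc a b).indicator (fun _ => c) t = (b - a) * c := by
  have hsub : Set.Ioc a b ⊆ Set.Ioi 0 := fun _ ht => ha.trans_lt ht.1
  simp [setIntegral_indicator measurableSet_Ioc, Set.inter_eq_right.2 hsub, hab]

theorem choquet_indicator_one (hν : ν ∅ = 0) (A : Finset Ω) :
    choquet ν ((A : Set Ω).indicator 1) = ν A := by
  classical
  have superlevel_eq : Set.EqOn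
      (fun t : ℝ => ν {ω | t ≤ (A : Set Ω).indicator 1 ω})
      ((Set.Ioc 0 1).indicator fun _ => ν A) (Set.Ioi 0) := by
    intro t (ht : 0 < t)
    rcases le_or_gt t 1 with ht1 | ht1
    · simp [Set.indicator_apply, apply_ite (t ≤ ·), ht, ht.not_ge, ht1]
    · simp [Set.indicator_apply, apply_ite (t ≤ ·), ht.not_ge, ht1.not_ge, hν]
  rw [choquet, setIntegral_congr_fun measurableSet_Ioi superlevel_eq,
    setIntegral_Ioi_indicator_Ioc le_rfl zero_le_one]
  ring

theorem factorsThrough_card_of_choquet_comp_perm (hν : ν ∅ = 0)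
    (hsym : ∀ (σ : Equiv.Perm Ω) (y : Ω → ℝ), (∀ ω, 0 ≤ y ω) →
      choquet ν (fun ω => y (σ ω)) = choquet ν y) :
    ν.FactorsThrough Finset.card := by
  classical
  intro A B hAB
  let σ : Equiv.Perm Ω := (Finset.equivOfCardEq hAB).extendSubtype
  have mem_iff (ω : Ω) : σ ω ∈ B ↔ ω ∈ A :=
    ⟨not_imp_not.1 (Equiv.extendSubtype_not_mem _ ω), Equiv.extendSubtype_mem _ ω⟩
  have indicator_comp : (fun ω => (B : Set Ω).indicator (1 : Ω → ℝ) (σ ω))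
      = (A : Set Ω).indicator 1 := by
    ext ω
    simp [Set.indicator_apply, mem_iff]
  have h := hsym σ ((B : Set Ω).indicator 1) (Set.indicator_nonneg fun _ _ => zero_le_one)
  rwa [indicator_comp, choquet_indicator_one hν, choquet_indicator_one hν] at h

variable [DecidableEq Ω]

theorem choquet_update_of_le (hν : ν ∅ = 0) {y : Ω → ℝ} {ω : Ω} {b : ℝ} {U : Finset Ω}
    (hy : 0 ≤ y ω) (hb : y ω ≤ b) (above : ∀ i ∈ U, b ≤ y i)
    (below : ∀ i ∉ U, i ≠ ω → y i ≤ y ω) :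
    choquet ν (Function.update y ω b) = choquet ν y + (b - y ω) * (ν (insert ω U) - ν U) := by
  have superlevel_update (t : ℝ) : ν {i | t ≤ Function.update y ω b i}
      = ν {i | t ≤ y i}
        + (Set.Ioc (y ω) b).indicator (fun _ => ν (insert ω U) - ν U) t := by
    by_cases ht : t ∈ Set.Ioc (y ω) b
    · have superlevel_old : ({i | t ≤ y i} : Finset Ω) = U := by
        ext i
        grind
      have superlevel_new : ({i | t ≤ Function.update y ω b i} : Finset Ω) = insert ω U := by
        ext i
        grind
      rw [superlevel_old, superlevel_new, Set.indicator_of_mem ht]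
      ring
    · have superlevel_same :
          ({i | t ≤ Function.update y ω b i} : Finset Ω) = ({i | t ≤ y i} : Finset Ω) := by
        ext i
        grind
      rw [superlevel_same, Set.indicator_of_notMem ht, add_zero]
  have integrable_indicator : IntegrableOn
      ((Set.Ioc (y ω) b).indicator fun _ => ν (insert ω U) - ν U) (Set.Ioi 0) :=
    ((integrable_indicator_iff measurableSet_Ioc).2 (by simp)).integrableOn
  simp only [choquet, superlevel_update]
  rw [integral_add (integrableOn_superlevel hν y) integrable_indicator,
    setIntegral_Ioi_indicator_Ioc hy hb]

theorem choquet_update (hν : ν ∅ = 0) {y : Ω → ℝ} {ω : Ω} {b : ℝ} {U : Finset Ω}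
    (hy : 0 ≤ y ω) (hb : 0 ≤ b) (hω : ω ∉ U) (above : ∀ i ∈ U, y ω ⊔ b ≤ y i)
    (below : ∀ i ∉ U, i ≠ ω → y i ≤ y ω ⊓ b) :
    choquet ν (Function.update y ω b) = choquet ν y + (b - y ω) * (ν (insert ω U) - ν U) := by
  simp only [sup_le_iff, le_inf_iff] at above below
  rcases le_total (y ω) b with h | h
  · exact choquet_update_of_le hν hy h (fun i hi => (above i hi).2)
      fun i hi hne => (below i hi hne).1
  · have raise_back := choquet_update_of_le hν (y := Function.update y ω b) (ω := ω) (b := y ω)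
      (U := U) (by simpa using hb) (by simpa using h) (by grind) (by grind)
    rw [Function.update_idem, Function.update_eq_self, Function.update_self] at raise_back
    linarith

theorem choquet_update_update_update (hν : ν ∅ = 0) {y : Ω → ℝ} {ω₁ ω₂ ω₃ : Ω} {δ : ℝ}
    {U : Finset Ω} (h₁ : ω₁ ∉ U) (h₂ : ω₂ ∉ U) (h₃ : ω₃ ∉ U)
    (h₁₂ : ω₁ ≠ ω₂) (h₁₃ : ω₁ ≠ ω₃) (h₂₃ : ω₂ ≠ ω₃)
    (nonneg : |δ| ≤ y ω₁) (gap₁₂ : y ω₁ + 3 * |δ| ≤ y ω₂) (gap₂₃ : y ω₂ + 3 * |δ| ≤ y ω₃)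
    (above : ∀ ω ∈ U, y ω₃ + |δ| ≤ y ω)
    (below : ∀ ω ∉ U, ω ≠ ω₁ → ω ≠ ω₂ → ω ≠ ω₃ → y ω ≤ y ω₁ - |δ|) :
    choquet ν (Function.update (Function.update (Function.update y
        ω₁ (y ω₁ + δ)) ω₂ (y ω₂ - 2 * δ)) ω₃ (y ω₃ + δ))
      = choquet ν y + δ * (ν (insert ω₁ (insert ω₂ (insert ω₃ U)))
        - 3 * ν (insert ω₂ (insert ω₃ U)) + 3 * ν (insert ω₃ U) - ν U) := by
  have δ_le := le_abs_self δ
  have neg_le_δ := neg_abs_le δ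
  set y₁ := Function.update y ω₁ (y ω₁ + δ) with hy₁
  set y₂ := Function.update y₁ ω₂ (y ω₂ - 2 * δ) with hy₂
  have y₁_ω₂ : y₁ ω₂ = y ω₂ := Function.update_of_ne h₁₂.symm ..
  have y₂_ω₃ : y₂ ω₃ = y ω₃ := by simp [hy₁, hy₂, h₁₃.symm, h₂₃.symm]
  have move₁ : choquet ν y₁ = choquet ν y + (y ω₁ + δ - y ω₁) *
      (ν (insert ω₁ (insert ω₂ (insert ω₃ U))) - ν (insert ω₂ (insert ω₃ U))) := by
    apply choquet_update hν <;> grind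
  have move₂ : choquet ν y₂ = choquet ν y₁ + (y ω₂ - 2 * δ - y₁ ω₂) *
      (ν (insert ω₂ (insert ω₃ U)) - ν (insert ω₃ U)) := by
    apply choquet_update hν <;> grind
  have move₃ : choquet ν (Function.update y₂ ω₃ (y ω₃ + δ)) = choquet ν y₂ +
      (y ω₃ + δ - y₂ ω₃) * (ν (insert ω₃ U) - ν U) := by
    apply choquet_update hν <;> grind
  rw [move₃, move₂, move₁, y₁_ω₂, y₂_ω₃]
  ring

end Choquet

theorem thirdDeriv_of_factorsThrough_card {Ω : Type*} [DecidableEq Ω] {ν : Finset Ω → ℝ}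
    (hcard : ν.FactorsThrough Finset.card) {ω₁ ω₂ ω₃ : Ω} {U : Finset Ω}
    (h₁ : ω₁ ∉ U) (h₂ : ω₂ ∉ U) (h₃ : ω₃ ∉ U)
    (h₁₂ : ω₁ ≠ ω₂) (h₁₃ : ω₁ ≠ ω₃) (h₂₃ : ω₂ ≠ ω₃) :
    thirdDeriv ν ω₁ ω₂ ω₃ U = ν (insert ω₁ (insert ω₂ (insert ω₃ U)))
      - 3 * ν (insert ω₂ (insert ω₃ U)) + 3 * ν (insert ω₃ U) - ν U := by
  let g : ℕ → ℝ := Function.extend Finset.card ν 0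
  have ν_eq (A : Finset Ω) : ν A = g A.card := (hcard.extend_apply 0 A).symm
  have U_disjoint : Disjoint U {ω₁, ω₂, ω₃} := by simp [h₁, h₂, h₃]
  have sum_over_card : thirdDeriv ν ω₁ ω₂ ω₃ U
      = ∑ C ∈ ({ω₁, ω₂, ω₃} : Finset Ω).powerset, (-1) ^ (3 - C.card) * g (U.card + C.card) := by
    rw [thirdDeriv, Finset.sdiff_eq_self_of_disjoint U_disjoint]
    refine Finset.sum_congr rfl fun C hC => ?_
    rw [ν_eq, Finset.card_union_of_disjoint (U_disjoint.mono_right (Finset.mem_powerset.1 hC))]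
  rw [sum_over_card, Finset.sum_powerset_apply_card fun k => (-1) ^ (3 - k) * g (U.card + k),
    Finset.card_eq_three.2 ⟨ω₁, ω₂, ω₃, h₁₂, h₁₃, h₂₃, rfl⟩]
  have card_insert₃ : (insert ω₃ U).card = U.card + 1 := Finset.card_insert_of_notMem h₃
  have card_insert₂₃ : (insert ω₂ (insert ω₃ U)).card = U.card + 2 := by
    rw [Finset.card_insert_of_notMem (by simp [h₂, h₂₃]), card_insert₃]
  have card_insert₁₂₃ : (insert ω₁ (insert ω₂ (insert ω₃ U))).card = U.card + 3 := by
    rw [Finset.card_insert_of_notMem (by simp [h₁, h₁₂, h₁₃]), card_insert₂₃]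
  simp only [ν_eq, card_insert₃, card_insert₂₃, card_insert₁₂₃, Finset.sum_range_succ,
    Finset.sum_range_zero, Nat.choose, Nat.reduceAdd, Nat.reduceSub, nsmul_eq_mul, Nat.cast_ofNat,
    Nat.cast_one, add_zero]
  ring

theorem CEU_thirdDeriv_nonneg_implies_ambiguityPrudent_general
    {Ω : Type*} [Fintype Ω] [DecidableEq Ω] (ν : Finset Ω → ℝ) (hν0 : ν ∅ = 0)
    (hsym : ∀ (σ : Equiv.Perm Ω) (y : Ω → ℝ), (∀ ω, 0 ≤ y ω) →
      choquet ν (fun ω => y (σ ω)) = choquet ν y)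
    (hd3 : ∀ (A : Finset Ω) (ω₁ ω₂ ω₃ : Ω), ω₁ ≠ ω₂ → ω₁ ≠ ω₃ → ω₂ ≠ ω₃ →
      0 ≤ thirdDeriv ν ω₁ ω₂ ω₃ A) :
    AmbiguityPrudentC (choquet ν) := by
  intro E ω₁ ω₂ ω₃ u₁ u₂ u₃ ub y _ _ _ h₁₂ h₁₃ h₂₃ _ _ hspacing hub hgap hnonneg _
    rfl rfl rfl hE hrest
  let U : Finset Ω := (E ∪ {ω₁, ω₂, ω₃})ᶜ
  have mem_U (ω : Ω) : ω ∈ U ↔ ω ∉ E ∧ ω ≠ ω₁ ∧ ω ≠ ω₂ ∧ ω ≠ ω₃ := by simp [U]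
  have choquet_shift (δ : ℝ) (hδ : |δ| = ub) :
      choquet ν (Function.update (Function.update (Function.update y
        ω₁ (y ω₁ + δ)) ω₂ (y ω₂ - 2 * δ)) ω₃ (y ω₃ + δ))
      = choquet ν y + δ * thirdDeriv ν ω₁ ω₂ ω₃ U := by
    rw [thirdDeriv_of_factorsThrough_card (factorsThrough_card_of_choquet_comp_perm hν0 hsym)]
    · apply choquet_update_update_update hν0 <;> grind
    all_goals grind
  have shift_up := choquet_shift ub (abs_of_pos hub)
  have shift_down := choquet_shift (-ub) (by rw [abs_neg, abs_of_pos hub])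
  rw [← sub_eq_add_neg, ← sub_eq_add_neg, mul_neg, sub_neg_eq_add] at shift_down
  rw [shift_up, shift_down]
  have := mul_nonneg hub.le (hd3 U ω₁ ω₂ ω₃ h₁₂ h₁₃ h₂₃)
  linarith

/-- If the Choquet integral of a capacity ν (with ν(S)=1) is symmetric under
permutations of the states (on nonnegative profiles) and the third derivative of ν is
nonnegative, then the Choquet integral is ambiguity prudent. -/
theorem CEU_thirdDeriv_nonneg_implies_ambiguityPrudent
    {Ω : Type*} [Fintype Ω] [DecidableEq Ω]
    (hcard : 3 ≤ Fintype.card Ω)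
    (ν : Finset Ω → ℝ) (hν0 : ν ∅ = 0) (hν1 : ν Finset.univ = 1)
    (hmono : ∀ A B : Finset Ω, A ⊆ B → ν A ≤ ν B)
    (hsym : ∀ (σ : Equiv.Perm Ω) (y : Ω → ℝ), (∀ ω, 0 ≤ y ω) →
      choquet ν (fun ω => y (σ ω)) = choquet ν y)
    (hd3 : ∀ (A : Finset Ω) (ω₁ ω₂ ω₃ : Ω), ω₁ ≠ ω₂ → ω₁ ≠ ω₃ → ω₂ ≠ ω₃ →
      0 ≤ thirdDeriv ν ω₁ ω₂ ω₃ A) :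
    AmbiguityPrudentC (choquet ν) := by
  exact CEU_thirdDeriv_nonneg_implies_ambiguityPrudent_general ν hν0 hsym hd3
end

section
/- Let S be a finite set with k ≥ 3 elements, let a ∈ [0,1] and b ∈ [−a,a], and let ν be the neo-additive capacity on S defined by ν(∅) = 0, ν(S) = 1, and ν(E) = (a − b)/2 + (1 − a)|E|/k for every E with ∅ ⊊ E ⊊ S. Then the Choquet integral V with respect to ν is ambiguity averse if and only if a = b; equivalently, Δ_{ω₁,ω₂}ν(A) ≥ 0 for every A ⊆ S and all distinct ω₁, ω₂ ∈ S if and only if a = b. -/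
open MeasureTheory

/-!
Moving one coordinate `ω` of a profile between two levels, without passing any other coordinate,
changes the Choquet integral by the distance moved times the marginal contribution of `ω` to the
set of states ranked above it. Hence, with `R` the set of states ranked above both, raising `ω₁` and
lowering `ω₂` by the same amount is beneficial iff `ω₁` contributes at least as much to `R ∪ {ω₂}`
as `ω₂` does to `R`. If `ν` depends only on cardinality, `ν E = f |E|`, this condition and the
nonnegativity of the second derivatives both say that `f` is convex on `{0, …, k}`.

For a neo-additive capacity, `f` is an affine function plus `(b - a) / 2` at `0` and `(a + b) / 2`
at `k`. When `k ≥ 3` no second difference sees both perturbations, and neither point is ever the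
middle one, so `f` is convex iff both are nonnegative, i.e. iff `|a| ≤ b`.
-/

theorem measurable_comp_of_antitone {α β γ : Type*} [TopologicalSpace α] [LinearOrder α]
    [OrderClosedTopology α] [MeasurableSpace α] [OpensMeasurableSpace α] [PartialOrder β]
    [Countable β] [MeasurableSpace γ] {f : α → β} (hf : Antitone f) (g : β → γ) :
    Measurable fun x => g (f x) := by
  let _ : MeasurableSpace β := ⊤
  have hf_meas : Measurable f := measurable_to_countable' fun _ =>
    (Set.ordConnected_singleton.preimage_anti hf).measurableSet
  exact measurable_from_top.comp hf_meas

section Choquet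

variable {Ω : Type*} [Fintype Ω] {ν : Finset Ω → ℝ}

theorem antitone_upperLevel (y : Ω → ℝ) :
    Antitone fun t : ℝ => Finset.univ.filter fun ω => t ≤ y ω :=
  fun _ _ hst => Finset.monotone_filter_right _ fun _ _ => hst.trans

theorem integrableOn_upperLevel (hν : ν ∅ = 0) (y : Ω → ℝ) :
    IntegrableOn (fun t : ℝ => ν (Finset.univ.filter fun ω => t ≤ y ω)) (Set.Ioi 0) := by
  obtain ⟨M, hM⟩ := Finite.exists_le y
  obtain ⟨C, hC⟩ := Finite.exists_le fun A => ‖ν A‖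
  have hbounded : IntegrableOn (fun t : ℝ => ν (Finset.univ.filter fun ω => t ≤ y ω))
      (Set.Ioc 0 M) :=
    Measure.integrableOn_of_bounded measure_Ioc_lt_top.ne
      (measurable_comp_of_antitone (antitone_upperLevel y) ν).aestronglyMeasurable
      (.of_forall fun _ => hC _)
  refine hbounded.of_forall_sdiff_eq_zero measurableSet_Ioi fun t ht => ?_
  have hMt : M < t := by simpa using ht.2 ∘ And.intro ht.1
  rw [Finset.filter_false_of_mem fun ω _ => ((hM ω).trans_lt hMt).not_ge, hν]

variable [DecidableEq Ω]

theorem upperLevel_update_sub_eq_indicator {ω : Ω} {R : Finset Ω} {u v : ℝ} {y : Ω → ℝ}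
    (hω : ω ∉ R) (huv : u ≤ v) (hR : ∀ i ∈ R, v ≤ y i) (hRc : ∀ i ∉ R, i ≠ ω → y i ≤ u) (t : ℝ) :
    ν (Finset.univ.filter fun i => t ≤ Function.update y ω v i) -
        ν (Finset.univ.filter fun i => t ≤ Function.update y ω u i) =
      (Set.Ioc u v).indicator (fun _ => ν (insert ω R) - ν R) t := by
  by_cases ht : t ∈ Set.Ioc u v
  · have hlevel (i : Ω) (hi : i ≠ ω) : t ≤ y i ↔ i ∈ R :=
      ⟨fun h => by_contra fun hiR => (ht.1.trans_le h).not_ge (hRc i hiR hi),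
        fun hiR => ht.2.trans (hR i hiR)⟩
    have hupper : (Finset.univ.filter fun i => t ≤ Function.update y ω v i) = insert ω R := by
      ext i
      rcases eq_or_ne i ω with rfl | hi
      · simp [ht.2]
      · simp [hi, hlevel i hi]
    have hlower : (Finset.univ.filter fun i => t ≤ Function.update y ω u i) = R := by
      ext i
      rcases eq_or_ne i ω with rfl | hi
      · simp [ht.1, hω]
      · simp [hi, hlevel i hi]
    rw [hupper, hlower, Set.indicator_of_mem ht]
  · have hsame : t ≤ v ↔ t ≤ u :=
      ⟨fun h => not_lt.mp fun h' => ht ⟨h', h⟩, fun h => h.trans huv⟩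
    rw [Set.indicator_of_notMem ht, sub_eq_zero]
    congr 1
    ext i
    rcases eq_or_ne i ω with rfl | hi
    · simp [hsame]
    · simp [hi]

theorem choquet_update_sub_choquet_update_s6 (hν : ν ∅ = 0) {ω : Ω} {R : Finset Ω} {u v : ℝ}
    {y : Ω → ℝ} (hω : ω ∉ R) (hu : 0 ≤ u) (huv : u ≤ v) (hR : ∀ i ∈ R, v ≤ y i)
    (hRc : ∀ i ∉ R, i ≠ ω → y i ≤ u) :
    choquet ν (Function.update y ω v) - choquet ν (Function.update y ω u) =
      (v - u) * (ν (insert ω R) - ν R) := by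
  have hsub : Set.Ioc u v ⊆ Set.Ioi 0 := fun _ ht => hu.trans_lt ht.1
  rw [choquet, choquet,
    ← integral_sub (integrableOn_upperLevel hν _) (integrableOn_upperLevel hν _)]
  simp_rw [upperLevel_update_sub_eq_indicator hω huv hR hRc]
  rw [setIntegral_indicator measurableSet_Ioc, Set.inter_eq_right.mpr hsub, setIntegral_const,
    Real.volume_real_Ioc_of_le huv, smul_eq_mul]

theorem choquet_contraction_sub_choquet_spread_s6 (hν : ν ∅ = 0) {R : Finset Ω} {ω₁ ω₂ : Ω}
    {u₁ u₂ ub : ℝ} {y : Ω → ℝ} (h₁ : ω₁ ∉ R) (h₂ : ω₂ ∉ R) (hne : ω₁ ≠ ω₂) (hub : 0 ≤ ub)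
    (hgap : 2 * ub ≤ u₂ - u₁) (hu₁ : 0 ≤ u₁ - ub) (hR : ∀ ω ∈ R, u₂ + ub ≤ y ω)
    (hRc : ∀ ω ∉ R, ω ≠ ω₁ → ω ≠ ω₂ → y ω ≤ u₁ - ub) :
    choquet ν (Function.update (Function.update y ω₁ (u₁ + ub)) ω₂ (u₂ - ub)) -
        choquet ν (Function.update (Function.update y ω₁ (u₁ - ub)) ω₂ (u₂ + ub)) =
      2 * ub * ((ν (insert ω₁ (insert ω₂ R)) - ν (insert ω₂ R)) - (ν (insert ω₂ R) - ν R)) := by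
  have raise_fst := choquet_update_sub_choquet_update_s6 hν (ω := ω₁) (R := insert ω₂ R)
    (u := u₁ - ub) (v := u₁ + ub) (y := Function.update y ω₂ (u₂ - ub))
    (by simp [hne, h₁]) hu₁ (by linarith) (by grind) (by grind)
  have raise_snd := choquet_update_sub_choquet_update_s6 hν (ω := ω₂) (R := R)
    (u := u₂ - ub) (v := u₂ + ub) (y := Function.update y ω₁ (u₁ - ub))
    h₂ (by linarith) (by linarith) (by grind) (by grind)
  rw [Function.update_comm hne.symm, Function.update_comm hne.symm] at raise_fst
  linear_combination raise_fst - raise_snd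

theorem ambiguityAverseC_choquet_iff (hν : ν ∅ = 0) :
    AmbiguityAverseC (choquet ν) ↔
      ∀ (R : Finset Ω) (ω₁ ω₂ : Ω), ω₁ ∉ R → ω₂ ∉ R → ω₁ ≠ ω₂ →
        ν (insert ω₂ R) - ν R ≤ ν (insert ω₁ (insert ω₂ R)) - ν (insert ω₂ R) := by
  constructor
  · intro h R ω₁ ω₂ h₁ h₂ hne
    let y : Ω → ℝ := fun ω => if ω ∈ R then 7 else if ω = ω₁ then 2 else if ω = ω₂ then 5 else 0
    have haverse := h (insert ω₁ (insert ω₂ R))ᶜ ω₁ ω₂ 2 5 1 y (by simp) (by simp) hne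
      (by norm_num) (by norm_num) (by norm_num) (by norm_num) (by grind) (by grind) (by grind)
      (by grind [Finset.mem_compl]) (by grind [Finset.mem_compl])
    have hdiff := choquet_contraction_sub_choquet_spread_s6 hν (u₁ := 2) (u₂ := 5) (ub := 1) (y := y)
      h₁ h₂ hne (by norm_num) (by norm_num) (by norm_num) (by grind) (by grind)
    linarith
  · intro h E ω₁ ω₂ u₁ u₂ ub y _ _ hne _ hub hgap hu₁ _ _ _ hE hEc
    let R := (insert ω₁ (insert ω₂ E))ᶜ
    have hmem (ω : Ω) : ω ∈ R ↔ ω ≠ ω₁ ∧ ω ≠ ω₂ ∧ ω ∉ E := by simp [R]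
    have h₁R : ω₁ ∉ R := by simp [R]
    have h₂R : ω₂ ∉ R := by simp [R]
    have hdiff := choquet_contraction_sub_choquet_spread_s6 hν h₁R h₂R hne hub.le hgap.le hu₁
      (fun ω hω => have ⟨hω₁, hω₂, hωE⟩ := (hmem ω).mp hω; (hEc ω hωE hω₁ hω₂).le)
      (fun ω hω hω₁ hω₂ => (hE ω (by simpa [hmem, hω₁, hω₂] using hω)).le)
    have hmarginal := sub_nonneg.mpr (h R ω₁ ω₂ h₁R h₂R hne)
    exact sub_nonneg.mp (hdiff ▸ by positivity)

end Choquet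

section SecondDeriv

variable {Ω : Type*} [DecidableEq Ω]

theorem secondDeriv_eq_insert (ν : Finset Ω → ℝ) {ω₁ ω₂ : Ω} (hne : ω₁ ≠ ω₂) (A : Finset Ω) :
    secondDeriv ν ω₁ ω₂ A =
      ν (insert ω₁ (insert ω₂ (A \ {ω₁, ω₂}))) - ν (insert ω₁ (A \ {ω₁, ω₂})) -
        ν (insert ω₂ (A \ {ω₁, ω₂})) + ν (A \ {ω₁, ω₂}) := by
  have hboth : A ∪ {ω₁, ω₂} = insert ω₁ (insert ω₂ (A \ {ω₁, ω₂})) := by grind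
  have hfst : (A ∪ {ω₁}) \ {ω₂} = insert ω₁ (A \ {ω₁, ω₂}) := by grind
  have hsnd : (A ∪ {ω₂}) \ {ω₁} = insert ω₂ (A \ {ω₁, ω₂}) := by grind
  rw [secondDeriv, hboth, hfst, hsnd]

theorem secondDeriv_nonneg_iff (ν : Finset Ω → ℝ) :
    (∀ (A : Finset Ω) (ω₁ ω₂ : Ω), ω₁ ≠ ω₂ → 0 ≤ secondDeriv ν ω₁ ω₂ A) ↔
      ∀ (R : Finset Ω) (ω₁ ω₂ : Ω), ω₁ ∉ R → ω₂ ∉ R → ω₁ ≠ ω₂ →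
        ν (insert ω₁ R) - ν R ≤ ν (insert ω₁ (insert ω₂ R)) - ν (insert ω₂ R) := by
  constructor
  · intro h R ω₁ ω₂ h₁ h₂ hne
    have hR : R \ {ω₁, ω₂} = R := by grind
    have hnonneg := h R ω₁ ω₂ hne
    rw [secondDeriv_eq_insert ν hne, hR] at hnonneg
    linarith
  · intro h A ω₁ ω₂ hne
    rw [secondDeriv_eq_insert ν hne]
    linarith [h (A \ {ω₁, ω₂}) ω₁ ω₂ (by simp) (by simp) hne]

end SecondDeriv

section Symmetric

variable {Ω : Type*} [Fintype Ω]

/-- Discrete convexity of `f` on `{0, …, k}`: its successive differences are nondecreasing there. -/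
def ConvexUpTo (f : ℕ → ℝ) (k : ℕ) : Prop :=
  ∀ n, n + 2 ≤ k → f (n + 1) - f n ≤ f (n + 2) - f (n + 1)

theorem forall_notMem_pair_card_iff (P : ℕ → Prop) :
    (∀ (R : Finset Ω) (ω₁ ω₂ : Ω), ω₁ ∉ R → ω₂ ∉ R → ω₁ ≠ ω₂ → P R.card) ↔
      ∀ n, n + 2 ≤ Fintype.card Ω → P n := by
  classical
  constructor
  · intro h n hn
    obtain ⟨R, -, rfl⟩ := (Finset.univ : Finset Ω).exists_subset_card_eq
      (show n ≤ Finset.univ.card by rw [Finset.card_univ]; omega)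
    obtain ⟨ω₁, h₁, ω₂, h₂, hne⟩ : ∃ ω₁ ∈ Rᶜ, ∃ ω₂ ∈ Rᶜ, ω₁ ≠ ω₂ := by
      rw [← Finset.one_lt_card, Finset.card_compl]
      omega
    exact h R ω₁ ω₂ (Finset.mem_compl.mp h₁) (Finset.mem_compl.mp h₂) hne
  · intro h R ω₁ ω₂ h₁ h₂ hne
    have hcard : (insert ω₁ (insert ω₂ R)).card = R.card + 2 := by simp [h₁, h₂, hne]
    exact h R.card (hcard ▸ Finset.card_le_univ _)

variable [DecidableEq Ω] {ν : Finset Ω → ℝ} {f : ℕ → ℝ}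

theorem ambiguityAverseC_choquet_iff_convexUpTo (hf : f 0 = 0) (hν : ∀ E, ν E = f E.card) :
    AmbiguityAverseC (choquet ν) ↔ ConvexUpTo f (Fintype.card Ω) := by
  rw [ambiguityAverseC_choquet_iff (by simp [hν, hf]), ConvexUpTo, ← forall_notMem_pair_card_iff]
  refine forall₃_congr fun R ω₁ ω₂ => forall₃_congr fun h₁ h₂ hne => ?_
  simp [hν, h₁, h₂, hne]

theorem secondDeriv_nonneg_iff_convexUpTo (hν : ∀ E, ν E = f E.card) :
    (∀ (A : Finset Ω) (ω₁ ω₂ : Ω), ω₁ ≠ ω₂ → 0 ≤ secondDeriv ν ω₁ ω₂ A) ↔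
      ConvexUpTo f (Fintype.card Ω) := by
  rw [secondDeriv_nonneg_iff, ConvexUpTo, ← forall_notMem_pair_card_iff]
  refine forall₃_congr fun R ω₁ ω₂ => forall₃_congr fun h₁ h₂ hne => ?_
  simp [hν, h₁, h₂, hne]

end Symmetric

section NeoAdditive

/-- The value of the neo-additive capacity with parameters `a` and `b` on an event with `n` of the
`k` states. At `n = k = 0` the value is that of the empty event. -/
noncomputable def neoAdditive (k : ℕ) (a b : ℝ) (n : ℕ) : ℝ :=
  if n = 0 then 0 else if n = k then 1 else (a - b) / 2 + (1 - a) * n / k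

theorem neoAdditive_eq_affine_add {k : ℕ} (hk : k ≠ 0) (a b : ℝ) (n : ℕ) :
    neoAdditive k a b n = (a - b) / 2 + (1 - a) / k * n +
      ((if n = 0 then (b - a) / 2 else 0) + if n = k then (a + b) / 2 else 0) := by
  unfold neoAdditive
  split_ifs with h0 hnk hnk
  · omega
  · rw [h0]; push_cast; ring
  · rw [hnk]; field_simp; ring
  · ring

theorem neoAdditive_second_difference {k : ℕ} (hk : 3 ≤ k) (a b : ℝ) {n : ℕ} (hn : n + 2 ≤ k) :
    (neoAdditive k a b (n + 2) - neoAdditive k a b (n + 1)) -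
        (neoAdditive k a b (n + 1) - neoAdditive k a b n) =
      (if n = 0 then (b - a) / 2 else 0) + if n + 2 = k then (a + b) / 2 else 0 := by
  have hn_ne : n ≠ k := by omega
  have hsucc_ne : n + 1 ≠ k := by omega
  simp only [neoAdditive_eq_affine_add (show k ≠ 0 by omega), hn_ne, hsucc_ne, if_false,
    Nat.add_eq_zero_iff, OfNat.ofNat_ne_zero, one_ne_zero, and_false]
  push_cast
  ring

theorem convexUpTo_neoAdditive_iff {k : ℕ} (hk : 3 ≤ k) (a b : ℝ) :
    ConvexUpTo (neoAdditive k a b) k ↔ |a| ≤ b := by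
  have hiff : ConvexUpTo (neoAdditive k a b) k ↔ ∀ n, n + 2 ≤ k →
      0 ≤ (if n = 0 then (b - a) / 2 else 0) + if n + 2 = k then (a + b) / 2 else 0 :=
    forall₂_congr fun n hn => by rw [← neoAdditive_second_difference hk a b hn, sub_nonneg]
  rw [hiff, abs_le']
  constructor
  · intro h
    have hbottom : 0 ≤ (b - a) / 2 := by
      simpa [show 2 ≠ k by omega] using h 0 (by omega)
    have htop : 0 ≤ (a + b) / 2 := by
      simpa [show k - 2 ≠ 0 by omega, show k - 2 + 2 = k by omega] using h (k - 2) (by omega)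
    constructor <;> linarith
  · rintro ⟨hab, hnab⟩ n -
    split_ifs <;> linarith

end NeoAdditive

theorem NCEU_ambiguityAverse_iff_a_eq_b_general
    {Ω : Type*} [Fintype Ω] [DecidableEq Ω] (hcard : 3 ≤ Fintype.card Ω) (a b : ℝ)
    (ν : Finset Ω → ℝ) (hν0 : ν ∅ = 0) (hν1 : ν Finset.univ = 1)
    (hν : ∀ E : Finset Ω, E ≠ ∅ → E ≠ Finset.univ →
      ν E = (a - b) / 2 + (1 - a) * E.card / (Fintype.card Ω : ℝ)) :
    (AmbiguityAverseC (choquet ν) ↔ |a| ≤ b) ∧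
    ((∀ (A : Finset Ω) (ω₁ ω₂ : Ω), ω₁ ≠ ω₂ → 0 ≤ secondDeriv ν ω₁ ω₂ A) ↔ |a| ≤ b) := by
  have hcard_eq (E : Finset Ω) : ν E = neoAdditive (Fintype.card Ω) a b E.card := by
    simp only [neoAdditive, Finset.card_eq_zero, Finset.card_eq_iff_eq_univ]
    split_ifs with h0 h1
    · rw [h0, hν0]
    · rw [h1, hν1]
    · exact hν E h0 h1
  rw [← convexUpTo_neoAdditive_iff hcard a b]
  exact ⟨ambiguityAverseC_choquet_iff_convexUpTo (if_pos rfl) hcard_eq,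
    secondDeriv_nonneg_iff_convexUpTo hcard_eq⟩

/-- For the neo-additive capacity ν with parameters a ∈ [0,1], b ∈ [−a,a] on a
finite set with k ≥ 3 elements, the Choquet integral is ambiguity averse iff a = b;
equivalently, the second derivative of ν is nonnegative iff a = b. -/
theorem NCEU_ambiguityAverse_iff_a_eq_b
    {Ω : Type*} [Fintype Ω] [DecidableEq Ω]
    (hcard : 3 ≤ Fintype.card Ω)
    (a b : ℝ) (ha : a ∈ Set.Icc (0 : ℝ) 1) (hb : b ∈ Set.Icc (-a) a)
    (ν : Finset Ω → ℝ)
    (hν0 : ν ∅ = 0) (hν1 : ν Finset.univ = 1)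
    (hν : ∀ E : Finset Ω, E ≠ ∅ → E ≠ Finset.univ →
      ν E = (a - b) / 2 + (1 - a) * E.card / (Fintype.card Ω : ℝ)) :
    (AmbiguityAverseC (choquet ν) ↔ a = b) ∧
    ((∀ (A : Finset Ω) (ω₁ ω₂ : Ω), ω₁ ≠ ω₂ → 0 ≤ secondDeriv ν ω₁ ω₂ A) ↔ a = b) := by
  have habs : |a| ≤ b ↔ a = b := by rw [abs_of_nonneg ha.1, hb.2.ge_iff_eq']
  simpa only [habs] using NCEU_ambiguityAverse_iff_a_eq_b_general hcard a b ν hν0 hν1 hν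
end

section
/- Let S be a finite set with k ≥ 3 elements, let a ∈ [0,1] and b ∈ [−a,a], and let ν be the neo-additive capacity on S defined by ν(∅) = 0, ν(S) = 1, and ν(E) = (a − b)/2 + (1 − a)|E|/k for every E with ∅ ⊊ E ⊊ S. Then Δ_{ω₁,ω₂,ω₃}ν(A) ≥ 0 for every A ⊆ S and all distinct ω₁, ω₂, ω₃ ∈ S; consequently, the Choquet integral V with respect to ν is ambiguity prudent. -/
open MeasureTheory

/-!
Raising a single state by `δ` without overtaking another state changes the Choquet integral by `δ`
times the marginal contribution of that state to the set of states above it. Passing from `y_A` to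
`y_B` consists of three such moves: `ω₁` and `ω₃` go up by `2ū` and `ω₂` goes down by `4ū`. If `D`
is the set of states above `ω₃`, the total change is therefore `2ū` times
`(ν(D ∪ 123) - ν(D ∪ 23)) - 2 (ν(D ∪ 23) - ν(D ∪ 3)) + (ν(D ∪ 3) - ν(D))`.
When `ν(E) = f(|E|)`, this second difference of marginal contributions and the third derivative of
`ν` are both the third forward difference of `f`. For a neo-additive `ν` the function `f` is affine
except for jumps at `0` and `|Ω|`, and only these jumps contribute, with a nonnegative sign.
-/

section Choquet

open Finset Function

variable {Ω : Type*} [Fintype Ω] {ν : Finset Ω → ℝ}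

theorem measurable_comp_filter_le (ν : Finset Ω → ℝ) (y : Ω → ℝ) :
    Measurable fun t : ℝ => ν (univ.filter fun ω => t ≤ y ω) := by
  have hanti : Antitone fun t : ℝ => univ.filter fun ω => t ≤ y ω :=
    fun _ _ hst => monotone_filter_right _ fun _ _ ht => hst.trans ht
  let _ : MeasurableSpace (Finset Ω) := ⊤
  refine (measurable_from_top (f := ν)).comp (measurable_to_countable' fun A => ?_)
  exact (Set.ordConnected_singleton.preimage_anti hanti).measurableSet

theorem integrableOn_comp_filter_le (hν : ν ∅ = 0) (y : Ω → ℝ) :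
    IntegrableOn (fun t => ν (univ.filter fun ω => t ≤ y ω)) (Set.Ioi 0) := by
  obtain ⟨M, hM⟩ := (Set.finite_range y).bddAbove
  obtain ⟨K, hK⟩ := (Set.finite_range fun A => ‖ν A‖).bddAbove
  have hbounded : IntegrableOn (fun t => ν (univ.filter fun ω => t ≤ y ω)) (Set.Ioc 0 M) :=
    Measure.integrableOn_of_bounded measure_Ioc_lt_top.ne
      (measurable_comp_filter_le ν y).aestronglyMeasurable
      (Filter.Eventually.of_forall fun _ => hK (Set.mem_range_self _))
  refine hbounded.of_forall_sdiff_eq_zero measurableSet_Ioi fun t ht => ?_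
  have hMt : M < t := not_le.1 fun h => ht.2 ⟨ht.1, h⟩
  rw [filter_eq_empty_iff.2 fun ω _ => ((hM ⟨ω, rfl⟩).trans_lt hMt).not_ge, hν]

variable [DecidableEq Ω]

theorem comp_filter_le_sub_eq_indicator {x z : Ω → ℝ} {ω : Ω} {D : Finset Ω}
    (hxz : ∀ ω' ≠ ω, z ω' = x ω') (hle : x ω ≤ z ω) (hω : ω ∉ D)
    (habove : ∀ ω' ∈ D, z ω ≤ x ω') (hbelow : ∀ ω' ∉ insert ω D, x ω' ≤ x ω) (t : ℝ) :
    ν (univ.filter fun ω' => t ≤ z ω') - ν (univ.filter fun ω' => t ≤ x ω') =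
      (Set.Ioc (x ω) (z ω)).indicator (fun _ => ν (insert ω D) - ν D) t := by
  by_cases ht : t ∈ Set.Ioc (x ω) (z ω)
  · have hz : (univ.filter fun ω' => t ≤ z ω') = insert ω D := by
      ext ω'
      rcases eq_or_ne ω' ω with rfl | hne <;> grind
    have hx : (univ.filter fun ω' => t ≤ x ω') = D := by
      ext ω'
      rcases eq_or_ne ω' ω with rfl | hne <;> grind
    rw [hz, hx, Set.indicator_of_mem ht]
  · have hlevel (ω') : t ≤ z ω' ↔ t ≤ x ω' := by
      rcases eq_or_ne ω' ω with rfl | hne <;> grind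
    simp only [hlevel, sub_self, Set.indicator_of_notMem ht]

theorem choquet_sub_choquet_eq_mul_marginal (hν : ν ∅ = 0) {x z : Ω → ℝ} {ω : Ω} {D : Finset Ω}
    (hxz : ∀ ω' ≠ ω, z ω' = x ω') (hpos : 0 ≤ x ω) (hle : x ω ≤ z ω) (hω : ω ∉ D)
    (habove : ∀ ω' ∈ D, z ω ≤ x ω') (hbelow : ∀ ω' ∉ insert ω D, x ω' ≤ x ω) :
    choquet ν z - choquet ν x = (z ω - x ω) * (ν (insert ω D) - ν D) := by
  have hIoc : Set.Ioi 0 ∩ Set.Ioc (x ω) (z ω) = Set.Ioc (x ω) (z ω) :=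
    Set.inter_eq_right.2 fun t ht => hpos.trans_lt ht.1
  rw [choquet, choquet,
    ← integral_sub (integrableOn_comp_filter_le hν z) (integrableOn_comp_filter_le hν x)]
  simp only [comp_filter_le_sub_eq_indicator hxz hle hω habove hbelow]
  rw [setIntegral_indicator measurableSet_Ioc, hIoc, setIntegral_const,
    Real.volume_real_Ioc_of_le hle, smul_eq_mul]

theorem ambiguityPrudentC_choquet_of_marginals (hν : ν ∅ = 0)
    (hmarginal : ∀ (D : Finset Ω) (ω₁ ω₂ ω₃ : Ω), ω₁ ∉ D → ω₂ ∉ D → ω₃ ∉ D →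
      ω₁ ≠ ω₂ → ω₁ ≠ ω₃ → ω₂ ≠ ω₃ →
      2 * (ν (insert ω₂ (insert ω₃ D)) - ν (insert ω₃ D)) ≤
        (ν (insert ω₁ (insert ω₂ (insert ω₃ D))) - ν (insert ω₂ (insert ω₃ D))) +
          (ν (insert ω₃ D) - ν D)) :
    AmbiguityPrudentC (choquet ν) := by
  intro E ω₁ ω₂ ω₃ u₁ u₂ u₃ ub y _ _ _ h₁₂ h₁₃ h₂₃ _ _ hu hub hub₃ hu₁ _ _ _ _ hbelow habove
  let P (x₁ x₂ x₃ : ℝ) : Ω → ℝ := update (update (update y ω₁ x₁) ω₂ x₂) ω₃ x₃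
  change choquet ν (P (u₁ - ub) (u₂ + 2 * ub) (u₃ - ub)) ≤
    choquet ν (P (u₁ + ub) (u₂ - 2 * ub) (u₃ + ub))
  have P₁ (x₁ x₂ x₃) : P x₁ x₂ x₃ ω₁ = x₁ := by simp [P, h₁₂, h₁₃]
  have P₂ (x₁ x₂ x₃) : P x₁ x₂ x₃ ω₂ = x₂ := by simp [P, h₂₃]
  have P₃ (x₁ x₂ x₃) : P x₁ x₂ x₃ ω₃ = x₃ := by simp [P]
  have P_of_ne (x₁ x₂ x₃ ω) (hω₁ : ω ≠ ω₁) (hω₂ : ω ≠ ω₂) (hω₃ : ω ≠ ω₃) :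
      P x₁ x₂ x₃ ω = y ω := by simp [P, hω₁, hω₂, hω₃]
  obtain ⟨D, mem_D⟩ : ∃ D : Finset Ω, ∀ ω, ω ∈ D ↔ ω ∉ E ∧ ω ≠ ω₁ ∧ ω ≠ ω₂ ∧ ω ≠ ω₃ :=
    ⟨univ.filter fun ω => ω ∉ E ∧ ω ≠ ω₁ ∧ ω ≠ ω₂ ∧ ω ≠ ω₃, by simp⟩
  -- `hub₃` gives `u₁ + ub < u₂ - 2 * ub` and `u₂ + 2 * ub < u₃ - ub`: no move overtakes a state.
  have raise₁ : choquet ν (P (u₁ + ub) (u₂ + 2 * ub) (u₃ - ub)) -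
        choquet ν (P (u₁ - ub) (u₂ + 2 * ub) (u₃ - ub)) =
      (u₁ + ub - (u₁ - ub)) *
        (ν (insert ω₁ (insert ω₂ (insert ω₃ D))) - ν (insert ω₂ (insert ω₃ D))) := by
    convert choquet_sub_choquet_eq_mul_marginal hν ?_ ?_ ?_ ?_ ?_ ?_ using 2 <;> grind
  have lower₂ : choquet ν (P (u₁ + ub) (u₂ + 2 * ub) (u₃ - ub)) -
        choquet ν (P (u₁ + ub) (u₂ - 2 * ub) (u₃ - ub)) =
      (u₂ + 2 * ub - (u₂ - 2 * ub)) * (ν (insert ω₂ (insert ω₃ D)) - ν (insert ω₃ D)) := by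
    convert choquet_sub_choquet_eq_mul_marginal hν ?_ ?_ ?_ ?_ ?_ ?_ using 2 <;> grind
  have raise₃ : choquet ν (P (u₁ + ub) (u₂ - 2 * ub) (u₃ + ub)) -
        choquet ν (P (u₁ + ub) (u₂ - 2 * ub) (u₃ - ub)) =
      (u₃ + ub - (u₃ - ub)) * (ν (insert ω₃ D) - ν D) := by
    convert choquet_sub_choquet_eq_mul_marginal hν ?_ ?_ ?_ ?_ ?_ ?_ using 2 <;> grind
  have hgain := mul_le_mul_of_nonneg_left
    (hmarginal D ω₁ ω₂ ω₃ (by simp [mem_D]) (by simp [mem_D]) (by simp [mem_D]) h₁₂ h₁₃ h₂₃) hub.le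
  linarith

end Choquet

section Symmetric

open Finset

theorem fwdDiff_iter_three {R : Type*} [CommRing R] (f : ℕ → R) (n : ℕ) :
    (fwdDiff 1)^[3] f n = f (n + 3) - 3 * f (n + 2) + 3 * f (n + 1) - f n := by
  simp only [Function.iterate_succ, Function.iterate_zero, Function.comp_apply, id, fwdDiff,
    add_assoc, Nat.reduceAdd]
  ring

variable {Ω : Type*} [DecidableEq Ω] {ω₁ ω₂ ω₃ : Ω}

theorem thirdDeriv_comp_card (f : ℕ → ℝ) (h₁₂ : ω₁ ≠ ω₂) (h₁₃ : ω₁ ≠ ω₃) (h₂₃ : ω₂ ≠ ω₃)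
    (A : Finset Ω) :
    thirdDeriv (fun E => f #E) ω₁ ω₂ ω₃ A = (fwdDiff 1)^[3] f #(A \ {ω₁, ω₂, ω₃}) := by
  have hcard : #({ω₁, ω₂, ω₃} : Finset Ω) = 3 := card_eq_three.2 ⟨ω₁, ω₂, ω₃, h₁₂, h₁₃, h₂₃, rfl⟩
  have hunion : ∀ C ∈ ({ω₁, ω₂, ω₃} : Finset Ω).powerset,
      #(A \ {ω₁, ω₂, ω₃} ∪ C) = #(A \ {ω₁, ω₂, ω₃}) + #C := fun C hC =>
    card_union_of_disjoint (disjoint_of_subset_right (mem_powerset.1 hC) sdiff_disjoint)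
  rw [thirdDeriv, sum_congr rfl fun C hC => by rw [hunion C hC],
    sum_powerset_apply_card fun k => (-1 : ℝ) ^ (3 - k) * f (#(A \ {ω₁, ω₂, ω₃}) + k),
    fwdDiff_iter_eq_sum_shift, hcard]
  refine sum_congr rfl fun k _ => ?_
  simp only [nsmul_eq_mul, smul_eq_mul, mul_one, zsmul_eq_mul]
  push_cast
  ring

theorem ambiguityPrudentC_choquet_comp_card [Fintype Ω] {f : ℕ → ℝ} (hf : f 0 = 0)
    (hderiv : ∀ (A : Finset Ω) (ω₁ ω₂ ω₃ : Ω), ω₁ ≠ ω₂ → ω₁ ≠ ω₃ → ω₂ ≠ ω₃ →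
      0 ≤ thirdDeriv (fun E => f #E) ω₁ ω₂ ω₃ A) :
    AmbiguityPrudentC (choquet fun E : Finset Ω => f #E) := by
  refine ambiguityPrudentC_choquet_of_marginals (by simpa using hf) ?_
  intro D ω₁ ω₂ ω₃ h₁ h₂ h₃ h₁₂ h₁₃ h₂₃
  have hD : D \ {ω₁, ω₂, ω₃} = D := by simp [h₁, h₂, h₃]
  have hΔ : 0 ≤ (fwdDiff 1)^[3] f #D := by
    simpa only [thirdDeriv_comp_card f h₁₂ h₁₃ h₂₃, hD] using hderiv D ω₁ ω₂ ω₃ h₁₂ h₁₃ h₂₃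
  have card₃ : #(insert ω₃ D) = #D + 1 := card_insert_of_notMem h₃
  have card₂₃ : #(insert ω₂ (insert ω₃ D)) = #D + 2 := by
    rw [card_insert_of_notMem (by simp [h₂, h₂₃]), card₃]
  have card₁₂₃ : #(insert ω₁ (insert ω₂ (insert ω₃ D))) = #D + 3 := by
    rw [card_insert_of_notMem (by simp [h₁, h₁₂, h₁₃]), card₂₃]
  rw [fwdDiff_iter_three] at hΔ
  rw [card₃, card₂₃, card₁₂₃]
  linarith

end Symmetric

section NeoAdditive

open Finset

/-- The value that a neo-additive set function on a set with `N` elements takes on a set with `n`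
elements: each element weighs `d`, and there are jumps of height `c` on leaving the empty set and
of height `e` on reaching the full set. -/
def neoAdditiveProfile (c d e : ℝ) (N n : ℕ) : ℝ :=
  if n = 0 then 0 else c + d * n + if n = N then e else 0

theorem fwdDiff_iter_three_neoAdditiveProfile (c d e : ℝ) {N n : ℕ} (hn : n + 3 ≤ N) :
    (fwdDiff 1)^[3] (neoAdditiveProfile c d e N) n =
      (if n = 0 then c else 0) + (if n + 3 = N then e else 0) := by
  have h₀ : n ≠ N := by omega
  have h₁ : n + 1 ≠ N := by omega
  have h₂ : n + 2 ≠ N := by omega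
  simp only [fwdDiff_iter_three, neoAdditiveProfile, h₀, h₁, h₂]
  rcases eq_or_ne n 0 with rfl | hn₀
  · simp only [zero_add, OfNat.ofNat_ne_zero, one_ne_zero, ↓reduceIte, Nat.cast_ofNat, Nat.cast_one]
    ring
  · simp only [hn₀, Nat.add_eq_zero_iff, OfNat.ofNat_ne_zero, one_ne_zero, and_false, ↓reduceIte,
      Nat.cast_add, Nat.cast_ofNat, Nat.cast_one]
    ring

variable {Ω : Type*} [Fintype Ω]

theorem eq_neoAdditiveProfile_card {c d e : ℝ} {ν : Finset Ω → ℝ} (hν₀ : ν ∅ = 0)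
    (hν₁ : ν univ = c + d * Fintype.card Ω + e)
    (hν : ∀ E : Finset Ω, E ≠ ∅ → E ≠ univ → ν E = c + d * #E) :
    ν = fun E => neoAdditiveProfile c d e (Fintype.card Ω) #E := by
  funext E
  rcases eq_or_ne E ∅ with rfl | h₀
  · simp [neoAdditiveProfile, hν₀]
  rcases eq_or_ne E univ with rfl | h₁
  · have hk : #(univ : Finset Ω) ≠ 0 := mt card_eq_zero.1 h₀
    rw [hν₁, neoAdditiveProfile, if_neg hk, card_univ, if_pos rfl]
  · simp [neoAdditiveProfile, hν E h₀ h₁, h₀, card_eq_iff_eq_univ, h₁]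

variable [DecidableEq Ω]

theorem thirdDeriv_neoAdditiveProfile_nonneg {c e : ℝ} (hc : 0 ≤ c) (d : ℝ) (he : 0 ≤ e)
    (A : Finset Ω) {ω₁ ω₂ ω₃ : Ω} (h₁₂ : ω₁ ≠ ω₂) (h₁₃ : ω₁ ≠ ω₃) (h₂₃ : ω₂ ≠ ω₃) :
    0 ≤ thirdDeriv (fun E => neoAdditiveProfile c d e (Fintype.card Ω) #E) ω₁ ω₂ ω₃ A := by
  have hcard : #(A \ {ω₁, ω₂, ω₃}) + 3 ≤ Fintype.card Ω := by
    rw [← card_eq_three.2 ⟨ω₁, ω₂, ω₃, h₁₂, h₁₃, h₂₃, rfl⟩,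
      ← card_union_of_disjoint sdiff_disjoint]
    exact card_le_univ _
  rw [thirdDeriv_comp_card _ h₁₂ h₁₃ h₂₃, fwdDiff_iter_three_neoAdditiveProfile _ _ _ hcard]
  positivity

theorem NCEU_thirdDeriv_nonneg_and_ambiguityPrudent_general {c e : ℝ} (hc : 0 ≤ c) (d : ℝ)
    (he : 0 ≤ e) {ν : Finset Ω → ℝ} (hν₀ : ν ∅ = 0)
    (hν₁ : ν univ = c + d * Fintype.card Ω + e)
    (hν : ∀ E : Finset Ω, E ≠ ∅ → E ≠ univ → ν E = c + d * #E) :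
    (∀ (A : Finset Ω) (ω₁ ω₂ ω₃ : Ω), ω₁ ≠ ω₂ → ω₁ ≠ ω₃ → ω₂ ≠ ω₃ →
      0 ≤ thirdDeriv ν ω₁ ω₂ ω₃ A) ∧
    AmbiguityPrudentC (choquet ν) := by
  obtain rfl := eq_neoAdditiveProfile_card hν₀ hν₁ hν
  have hderiv (A : Finset Ω) (ω₁ ω₂ ω₃ : Ω) (h₁₂ : ω₁ ≠ ω₂) (h₁₃ : ω₁ ≠ ω₃) (h₂₃ : ω₂ ≠ ω₃) :=
    thirdDeriv_neoAdditiveProfile_nonneg hc d he A h₁₂ h₁₃ h₂₃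
  exact ⟨hderiv, ambiguityPrudentC_choquet_comp_card (by simp [neoAdditiveProfile]) hderiv⟩

end NeoAdditive

/-- For the neo-additive capacity ν with parameters a ∈ [0,1], b ∈ [−a,a] on a
finite set with k ≥ 3 elements, the third derivative of ν is nonnegative; consequently
the Choquet integral is ambiguity prudent. -/
theorem NCEU_thirdDeriv_nonneg_and_ambiguityPrudent
    {Ω : Type*} [Fintype Ω] [DecidableEq Ω]
    (hcard : 3 ≤ Fintype.card Ω)
    (a b : ℝ) (ha : a ∈ Set.Icc (0 : ℝ) 1) (hb : b ∈ Set.Icc (-a) a)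
    (ν : Finset Ω → ℝ)
    (hν0 : ν ∅ = 0) (hν1 : ν Finset.univ = 1)
    (hν : ∀ E : Finset Ω, E ≠ ∅ → E ≠ Finset.univ →
      ν E = (a - b) / 2 + (1 - a) * E.card / (Fintype.card Ω : ℝ)) :
    (∀ (A : Finset Ω) (ω₁ ω₂ ω₃ : Ω), ω₁ ≠ ω₂ → ω₁ ≠ ω₃ → ω₂ ≠ ω₃ →
      0 ≤ thirdDeriv ν ω₁ ω₂ ω₃ A) ∧
    AmbiguityPrudentC (choquet ν) := by
  have hk : (Fintype.card Ω : ℝ) ≠ 0 := Nat.cast_ne_zero.2 (by omega)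
  refine NCEU_thirdDeriv_nonneg_and_ambiguityPrudent_general (c := (a - b) / 2) (e := (a + b) / 2)
    (by linarith [hb.2]) ((1 - a) / Fintype.card Ω) (by linarith [hb.1]) hν0 ?_ fun E h₀ h₁ => ?_
  · rw [hν1, div_mul_cancel₀ _ hk]
    ring
  · rw [hν E h₀ h₁, div_mul_eq_mul_div]
end

section
/- Let k ≥ 2 and let c : Δ_k → [0,∞) be lower semicontinuous, convex and symmetric. Then for every y ∈ ℝ^k, every minimizer p* of p ↦ ⟨p, y⟩ + c(p) over Δ_k, and all indices i, j with y_i < y_j, one has p*_j ≤ p*_i. In particular, the VP functional U(y) = min_{p ∈ Δ_k}(⟨p, y⟩ + c(p)) is ambiguity averse. -/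
/-!
Transposing the coordinates `i`, `j` of `p` leaves `c p` unchanged and moves the linear part by
`(p j - p i) * (y i - y j)`, which is nonnegative when `p` is a minimizer; hence minimizers antivary
with `y`. A minimizer at `y_B` is moreover a supergradient of `U` there, and passing from `y_B` to
`y_A` transfers utility `2ū` from the poorer state `ω₁`, which carries at least as much weight, to
the richer state `ω₂`. The supporting affine map at `y_B` does not increase, and hence neither
does `U`.
-/

/-- Ambiguity aversion for a functional on utility profiles over the states {1,…,k}. -/
def AmbiguityAverse {k : ℕ} (U : (Fin k → ℝ) → ℝ) : Prop :=
  ∀ (E : Finset (Fin k)) (ω₁ ω₂ : Fin k) (u₁ u₂ ub : ℝ) (y : Fin k → ℝ),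
    ω₁ ∉ E → ω₂ ∉ E → ω₁ ≠ ω₂ →
    u₁ < u₂ → 0 < ub → 2 * ub < u₂ - u₁ →
    y ω₁ = u₁ → y ω₂ = u₂ →
    (∀ ω ∈ E, y ω < u₁ - ub) →
    (∀ ω, ω ∉ E → ω ≠ ω₁ → ω ≠ ω₂ → u₂ + ub < y ω) →
    U (Function.update (Function.update y ω₁ (u₁ + ub)) ω₂ (u₂ - ub)) ≥
      U (Function.update (Function.update y ω₁ (u₁ - ub)) ω₂ (u₂ + ub))

/-- Ambiguity prudence for a functional on utility profiles over the states {1,…,k}. -/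
def AmbiguityPrudent {k : ℕ} (U : (Fin k → ℝ) → ℝ) : Prop :=
  ∀ (E : Finset (Fin k)) (ω₁ ω₂ ω₃ : Fin k) (u₁ u₂ u₃ ub : ℝ) (y : Fin k → ℝ),
    ω₁ ∉ E → ω₂ ∉ E → ω₃ ∉ E →
    ω₁ ≠ ω₂ → ω₁ ≠ ω₃ → ω₂ ≠ ω₃ →
    u₁ < u₂ → u₂ < u₃ → u₂ - u₁ = u₃ - u₂ →
    0 < ub → 3 * ub < u₂ - u₁ →
    y ω₁ = u₁ → y ω₂ = u₂ → y ω₃ = u₃ →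
    (∀ ω ∈ E, y ω < u₁ - ub) →
    (∀ ω, ω ∉ E → ω ≠ ω₁ → ω ≠ ω₂ → ω ≠ ω₃ → u₃ + ub < y ω) →
    U (Function.update (Function.update (Function.update y ω₁ (u₁ + ub)) ω₂ (u₂ - 2 * ub)) ω₃ (u₃ + ub)) ≥
      U (Function.update (Function.update (Function.update y ω₁ (u₁ - ub)) ω₂ (u₂ + 2 * ub)) ω₃ (u₃ - ub))

section Variational

variable {ι R : Type*} [Fintype ι] [Ring R]

/-- The objective `p ↦ ⟨p, y⟩ + c p` that variational preferences minimize at the profile `y`. -/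
def variationalObjective (c : (ι → R) → R) (y p : ι → R) : R :=
  p ⬝ᵥ y + c p

/-- `U` is the variational-preferences functional with ambiguity index `c` and set of priors `s`.
Attainment of the minimum is part of the notion, so no `sInf` over a possibly unbounded set is
involved. -/
def IsVariationalFunctional [Preorder R] (s : Set (ι → R)) (c U : (ι → R) → R) : Prop :=
  ∀ y, IsLeast {v | ∃ p ∈ s, v = variationalObjective c y p} (U y)

/-- `p` is a supergradient of `U` at `y`: the affine function of slope `p` agreeing with `U` at `y`
lies above `U` everywhere. -/
def IsSupergradientAt [LE R] (U : (ι → R) → R) (p y : ι → R) : Prop :=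
  ∀ z, U z ≤ U y + p ⬝ᵥ (z - y)

theorem IsVariationalFunctional.exists_isMinOn_isSupergradientAt [Preorder R] {s : Set (ι → R)}
    {c U : (ι → R) → R} (hU : IsVariationalFunctional s c U) (y : ι → R) :
    ∃ p ∈ s, IsMinOn (variationalObjective c y) s p ∧ IsSupergradientAt U p y := by
  obtain ⟨⟨p, hp, hUy⟩, hlower⟩ := hU y
  refine ⟨p, hp, fun q hq => hUy ▸ hlower ⟨q, hq, rfl⟩, fun z => ?_⟩
  calc U z ≤ p ⬝ᵥ z + c p := (hU z).2 ⟨p, hp, rfl⟩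
    _ = U y + p ⬝ᵥ (z - y) := by
      rw [hUy, variationalObjective, dotProduct_sub]
      abel

theorem comp_swap_dotProduct_sub_dotProduct [DecidableEq ι] (p y : ι → R) (i j : ι) :
    (p ∘ Equiv.swap i j) ⬝ᵥ y - p ⬝ᵥ y = (p j - p i) * (y i - y j) := by
  have hdiff : p ∘ Equiv.swap i j - p = Pi.single i (p j - p i) - Pi.single j (p j - p i) := by
    ext l
    simp only [Pi.sub_apply, Function.comp_apply, Pi.single_apply, Equiv.swap_apply_def]
    split_ifs <;> simp_all
  rw [← sub_dotProduct, hdiff, sub_dotProduct, single_dotProduct, single_dotProduct, mul_sub]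

theorem antivary_of_isMinOn_variationalObjective [DecidableEq ι] [LinearOrder R]
    [IsStrictOrderedRing R] {s : Set (ι → R)} {c : (ι → R) → R} {p y : ι → R}
    (hmem : ∀ i j, p ∘ Equiv.swap i j ∈ s) (hc : ∀ i j, c (p ∘ Equiv.swap i j) ≤ c p)
    (hmin : IsMinOn (variationalObjective c y) s p) : Antivary p y := by
  refine antivary_iff_forall_mul_nonpos.2 fun i j => ?_
  have hle : p ⬝ᵥ y ≤ (p ∘ Equiv.swap i j) ⬝ᵥ y :=
    le_of_add_le_add_right ((hmin (hmem i j)).trans (add_le_add_right (hc i j) _))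
  have hnonneg : 0 ≤ (p j - p i) * (y i - y j) :=
    comp_swap_dotProduct_sub_dotProduct p y i j ▸ sub_nonneg.2 hle
  rwa [← neg_sub (y j), mul_neg, neg_nonneg] at hnonneg

end Variational

theorem comp_perm_mem_stdSimplex {ι R : Type*} [Fintype ι] [Semiring R] [PartialOrder R]
    {p : ι → R} (hp : p ∈ stdSimplex R ι) (σ : Equiv.Perm ι) : p ∘ σ ∈ stdSimplex R ι :=
  ⟨fun i => hp.1 (σ i), (Equiv.sum_comp σ p).trans hp.2⟩

theorem update_update_sub_update_update {ι M : Type*} [DecidableEq ι] [AddGroup M] (y : ι → M)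
    {i j : ι} (hij : i ≠ j) (a b a' b' : M) :
    Function.update (Function.update y i a) j b - Function.update (Function.update y i a') j b' =
      Pi.single i (a - a') + Pi.single j (b - b') := by
  ext l
  simp only [Pi.sub_apply, Pi.add_apply, Pi.single_apply, Function.update_apply]
  split_ifs <;> simp_all

theorem ambiguityAverse_of_forall_exists_antivary_isSupergradientAt {k : ℕ}
    {U : (Fin k → ℝ) → ℝ} (hU : ∀ y, ∃ p, Antivary p y ∧ IsSupergradientAt U p y) :
    AmbiguityAverse U := by
  intro E ω₁ ω₂ u₁ u₂ ub y _ _ hne _ hub hgap _ _ _ _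
  set yA := Function.update (Function.update y ω₁ (u₁ - ub)) ω₂ (u₂ + ub)
  set yB := Function.update (Function.update y ω₁ (u₁ + ub)) ω₂ (u₂ - ub) with hyB
  obtain ⟨p, hanti, hsuper⟩ := hU yB
  have hlt : yB ω₁ < yB ω₂ := by
    simp only [hyB, Function.update_self, Function.update_of_ne hne]
    linarith
  have htransfer : p ⬝ᵥ (yA - yB) = 2 * ub * (p ω₂ - p ω₁) := by
    rw [update_update_sub_update_update y hne, dotProduct_add, dotProduct_single, dotProduct_single]
    ring
  calc U yA ≤ U yB + 2 * ub * (p ω₂ - p ω₁) := htransfer ▸ hsuper yA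
    _ ≤ U yB := add_le_of_nonpos_right <|
      mul_nonpos_of_nonneg_of_nonpos (by positivity) (sub_nonpos.2 (hanti hlt))

theorem VP_minimizers_monotone_and_ambiguityAverse_general {k : ℕ} {s : Set (Fin k → ℝ)}
    {c U : (Fin k → ℝ) → ℝ} (hs : ∀ p ∈ s, ∀ σ : Equiv.Perm (Fin k), p ∘ σ ∈ s)
    (hsymm : ∀ p ∈ s, ∀ σ : Equiv.Perm (Fin k), c (p ∘ σ) = c p)
    (hU : IsVariationalFunctional s c U) :
    (∀ y, ∀ p ∈ s, IsMinOn (variationalObjective c y) s p → Antivary p y) ∧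
      AmbiguityAverse U := by
  have hanti : ∀ y, ∀ p ∈ s, IsMinOn (variationalObjective c y) s p → Antivary p y :=
    fun y p hp => antivary_of_isMinOn_variationalObjective
      (fun i j => hs p hp (Equiv.swap i j)) (fun i j => (hsymm p hp (Equiv.swap i j)).le)
  refine ⟨hanti, ambiguityAverse_of_forall_exists_antivary_isSupergradientAt fun y => ?_⟩
  obtain ⟨p, hp, hmin, hsuper⟩ := hU.exists_isMinOn_isSupergradientAt y
  exact ⟨p, hanti y p hp hmin, hsuper⟩

/-- For k ≥ 2 and a lower semicontinuous, convex, symmetric ambiguity index c,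
every minimizer p* of p ↦ ⟨p,y⟩ + c(p) over Δ_k satisfies p*_j ≤ p*_i whenever y_i < y_j;
in particular, the VP functional U is ambiguity averse. -/
theorem VP_minimizers_monotone_and_ambiguityAverse
    {k : ℕ} (hk : 2 ≤ k)
    (c : (Fin k → ℝ) → ℝ)
    (hc0 : ∀ p ∈ stdSimplex ℝ (Fin k), 0 ≤ c p)
    (hlsc : LowerSemicontinuousOn c (stdSimplex ℝ (Fin k)))
    (hconv : ConvexOn ℝ (stdSimplex ℝ (Fin k)) c)
    (hsymm : ∀ p ∈ stdSimplex ℝ (Fin k), ∀ σ : Equiv.Perm (Fin k), c (fun i => p (σ i)) = c p)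
    (U : (Fin k → ℝ) → ℝ)
    (hU : ∀ y : Fin k → ℝ,
      IsLeast {v : ℝ | ∃ p ∈ stdSimplex ℝ (Fin k), v = (∑ i, p i * y i) + c p} (U y)) :
    (∀ (y : Fin k → ℝ), ∀ p ∈ stdSimplex ℝ (Fin k),
      (∀ q ∈ stdSimplex ℝ (Fin k), (∑ l, p l * y l) + c p ≤ (∑ l, q l * y l) + c q) →
      ∀ i j : Fin k, y i < y j → p j ≤ p i) ∧
    AmbiguityAverse U :=
  VP_minimizers_monotone_and_ambiguityAverse_general
    (fun _ hp => comp_perm_mem_stdSimplex hp) hsymm hU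
end

section
/- Let f : ℝ → ℝ be three times differentiable. Then f'''(t) ≥ 0 for all t ∈ ℝ if and only if for all x, y, z ∈ ℝ with x ≤ y ≤ z and y = (x + z)/2, and for all δ with 0 ≤ δ ≤ (z − x)/2, one has f(x + δ) + f(y − 2δ) + f(z + δ) ≥ f(x − δ) + f(y + 2δ) + f(z − δ). -/
/-!
For fixed `y` consider the central difference `S s = f (y + s) - f (y - s)`. In terms of
`u = (z - x) / 2 - δ` and `v = 2 * δ`, the inequality reads `S u + S v ≤ S (u + v)`, i.e. `S` is
superadditive on `[0, ∞)`.

If `f''' ≥ 0`, then `S'' s = f'' (y + s) - f'' (y - s) ≥ 0` for `s ≥ 0`, and a convex function on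
`[0, ∞)` vanishing at `0` is superadditive. Conversely, superadditivity together with `S 0 = 0`
forces `S' 0 ≤ S' s` for `s ≥ 0`. As `S'` is even, it has a local minimum at `0`, so that
`0 ≤ S''' 0 = 2 * f''' y`.
-/

open Set Filter Topology

section Superadditive

/-- Superadditivity of `g` for arguments in `s`. No closure of `s` under addition is required, so
`g` may be evaluated outside `s`. -/
def SuperadditiveOn {M N : Type*} [Add M] [Add N] [LE N] (s : Set M) (g : M → N) : Prop :=
  ∀ ⦃u⦄, u ∈ s → ∀ ⦃v⦄, v ∈ s → g u + g v ≤ g (u + v)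

theorem superadditiveOn_Ici_of_convexOn {𝕜 β : Type*} [Field 𝕜] [LinearOrder 𝕜]
    [IsStrictOrderedRing 𝕜] [AddCommGroup β] [PartialOrder β] [IsOrderedAddMonoid β] [Module 𝕜 β]
    [PosSMulMono 𝕜 β] {g : 𝕜 → β} (hg : ConvexOn 𝕜 (Ici 0) g) (hg₀ : g 0 ≤ 0) :
    SuperadditiveOn (Ici 0) g := by
  intro u (hu : 0 ≤ u) v (hv : 0 ≤ v)
  have huv : 0 ≤ u + v := add_nonneg hu hv
  rcases huv.eq_or_lt with hzero | hpos
  · obtain ⟨rfl, rfl⟩ := (add_eq_zero_iff_of_nonneg hu hv).1 hzero.symm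
    simpa using hg₀
  · have below_chord : ∀ t, 0 ≤ t → t ≤ u + v → g t ≤ (t / (u + v)) • g (u + v) := by
      intro t ht htuv
      have hcoeff : 0 ≤ (u + v - t) / (u + v) := div_nonneg (sub_nonneg.2 htuv) huv
      calc g t = g (((u + v - t) / (u + v)) • 0 + (t / (u + v)) • (u + v)) := by
            simp [div_mul_cancel₀ t hpos.ne']
        _ ≤ ((u + v - t) / (u + v)) • g 0 + (t / (u + v)) • g (u + v) :=
            hg.2 self_mem_Ici huv hcoeff (div_nonneg ht huv) (by field_simp; ring)
        _ ≤ (t / (u + v)) • g (u + v) :=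
            add_le_of_nonpos_left (smul_nonpos_of_nonneg_of_nonpos hcoeff hg₀)
    calc g u + g v ≤ (u / (u + v)) • g (u + v) + (v / (u + v)) • g (u + v) :=
          add_le_add (below_chord u hu (le_add_of_nonneg_right hv))
            (below_chord v hv (le_add_of_nonneg_left hu))
      _ = g (u + v) := by rw [← add_smul, ← add_div, div_self hpos.ne', one_smul]

theorem isMinOn_deriv_of_superadditiveOn_Ici {g : ℝ → ℝ} (hg : Differentiable ℝ g)
    (hadd : SuperadditiveOn (Ici 0) g) (hg₀ : 0 ≤ g 0) : IsMinOn (deriv g) (Ici 0) 0 := by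
  intro b (hb : 0 ≤ b)
  refine le_of_tendsto_of_tendsto (hg 0).hasDerivAt.tendsto_slope_zero_right
    (hg b).hasDerivAt.tendsto_slope_zero_right ?_
  filter_upwards [self_mem_nhdsWithin] with h (hh : 0 < h)
  have hincr : g (0 + h) - g 0 ≤ g (b + h) - g b := by
    rw [zero_add]
    linarith [hadd hb hh.le]
  exact smul_le_smul_of_nonneg_left hincr (inv_nonneg.2 hh.le)

end Superadditive

theorem deriv_deriv_nonneg_of_isLocalMin {f : ℝ → ℝ} {a : ℝ} (hmin : IsLocalMin f a)
    (hf : ContinuousAt f a) : 0 ≤ deriv (deriv f) a := by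
  by_contra! hneg
  have hmax : IsLocalMax f a := isLocalMax_of_deriv_deriv_neg hneg hmin.deriv_eq_zero hf
  have hconst : f =ᶠ[𝓝 a] fun _ ↦ f a := by
    filter_upwards [hmin, hmax] with t hge hle using le_antisymm hle hge
  have hzero : deriv (deriv f) a = 0 := by simpa using hconst.deriv.deriv_eq
  exact hneg.ne hzero

section Central

/-- The central difference of `f` at `y` with step `s`, as a function of `s`; it is not divided by
the step. -/
def centralDiff {G F : Type*} [AddGroup G] [AddGroup F] (f : G → F) (y s : G) : F :=
  f (y + s) - f (y - s)

/-- The sum of the values of `f` at the two points at distance `s` from `y`, as a function of `s`.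
Differentiation in `s` interchanges central sums and central differences. -/
def centralSum {G F : Type*} [AddGroup G] [AddGroup F] (f : G → F) (y s : G) : F :=
  f (y + s) + f (y - s)

theorem centralDiff_zero {G F : Type*} [AddGroup G] [AddGroup F] (f : G → F) (y : G) :
    centralDiff f y 0 = 0 := by
  simp [centralDiff]

theorem centralSum_abs {G F : Type*} [AddCommGroup G] [LinearOrder G] [AddCommGroup F]
    (f : G → F) (y s : G) : centralSum f y |s| = centralSum f y s := by
  rcases abs_choice s with h | h <;> simp [centralSum, h, add_comm, sub_eq_add_neg]

section Deriv

variable {𝕜 F : Type*} [NontriviallyNormedField 𝕜] [NormedAddCommGroup F] [NormedSpace 𝕜 F]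
  {f : 𝕜 → F}

theorem hasDerivAt_centralDiff (hf : Differentiable 𝕜 f) (y s : 𝕜) :
    HasDerivAt (centralDiff f y) (centralSum (deriv f) y s) s := by
  have h := ((hf (y + s)).hasDerivAt.comp_const_add y s).fun_sub
    ((hf (y - s)).hasDerivAt.comp_const_sub y s)
  rwa [sub_neg_eq_add] at h

theorem hasDerivAt_centralSum (hf : Differentiable 𝕜 f) (y s : 𝕜) :
    HasDerivAt (centralSum f y) (centralDiff (deriv f) y s) s := by
  have h := ((hf (y + s)).hasDerivAt.comp_const_add y s).fun_add
    ((hf (y - s)).hasDerivAt.comp_const_sub y s)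
  rwa [← sub_eq_add_neg] at h

theorem deriv_centralDiff (hf : Differentiable 𝕜 f) (y : 𝕜) :
    deriv (centralDiff f y) = centralSum (deriv f) y :=
  funext fun s ↦ (hasDerivAt_centralDiff hf y s).deriv

theorem deriv_centralSum (hf : Differentiable 𝕜 f) (y : 𝕜) :
    deriv (centralSum f y) = centralDiff (deriv f) y :=
  funext fun s ↦ (hasDerivAt_centralSum hf y s).deriv

end Deriv

theorem centralDiff_add_centralDiff_le_iff {G F : Type*} [AddGroup G] [AddCommGroup F]
    [PartialOrder F] [IsOrderedAddMonoid F] (f : G → F) (y u v : G) :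
    centralDiff f y u + centralDiff f y v ≤ centralDiff f y (u + v) ↔
      f (y - (u + v)) + f (y + v) + f (y + u) ≤ f (y - u) + f (y - v) + f (y + (u + v)) := by
  rw [← sub_nonneg, ← sub_nonneg (b := f (y - (u + v)) + f (y + v) + f (y + u))]
  exact iff_of_eq (congrArg _ (by simp only [centralDiff]; abel))

theorem superadditiveOn_centralDiff_iff_apportionment {𝕜 F : Type*} [Field 𝕜] [LinearOrder 𝕜]
    [IsStrictOrderedRing 𝕜] [AddCommGroup F] [PartialOrder F] [IsOrderedAddMonoid F] (f : 𝕜 → F) :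
    (∀ y, SuperadditiveOn (Ici 0) (centralDiff f y)) ↔
      ∀ x y z δ : 𝕜, x ≤ y → y ≤ z → y = (x + z) / 2 → 0 ≤ δ → δ ≤ (z - x) / 2 →
        f (x - δ) + f (y + 2 * δ) + f (z - δ) ≤ f (x + δ) + f (y - 2 * δ) + f (z + δ) := by
  constructor
  · intro hS x y z δ _ _ hy hδ hδ_le
    have hineq := hS y (sub_nonneg.2 hδ_le) (mul_nonneg zero_le_two hδ)
    rw [centralDiff_add_centralDiff_le_iff] at hineq
    rwa [show y - ((z - x) / 2 - δ + 2 * δ) = x - δ by linarith,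
      show y + ((z - x) / 2 - δ) = z - δ by linarith,
      show y - ((z - x) / 2 - δ) = x + δ by linarith,
      show y + ((z - x) / 2 - δ + 2 * δ) = z + δ by linarith] at hineq
  · intro hf y u (hu : 0 ≤ u) v (hv : 0 ≤ v)
    have hineq := hf (y - (u + v / 2)) y (y + (u + v / 2)) (v / 2) (by linarith) (by linarith)
      (by ring) (by linarith) (by linarith)
    rw [centralDiff_add_centralDiff_le_iff]
    rwa [show y - (u + v / 2) - v / 2 = y - (u + v) by ring,
      show y + (u + v / 2) - v / 2 = y + u by ring,
      show y - (u + v / 2) + v / 2 = y - u by ring,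
      show y + (u + v / 2) + v / 2 = y + (u + v) by ring,
      mul_div_cancel₀ v two_ne_zero] at hineq

variable {f : ℝ → ℝ}

theorem convexOn_Ici_centralDiff (hf : Differentiable ℝ f) (hf' : Differentiable ℝ (deriv f))
    (hmono : Monotone (deriv (deriv f))) (y : ℝ) : ConvexOn ℝ (Ici 0) (centralDiff f y) := by
  refine convexOn_of_hasDerivWithinAt2_nonneg (convex_Ici 0)
    (fun s _ ↦ (hasDerivAt_centralDiff hf y s).continuousAt.continuousWithinAt)
    (fun s _ ↦ (hasDerivAt_centralDiff hf y s).hasDerivWithinAt)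
    (fun s _ ↦ (hasDerivAt_centralSum hf' y s).hasDerivWithinAt) fun s hs ↦ ?_
  have hs₀ : 0 ≤ s := interior_subset hs
  exact sub_nonneg.2 (hmono (by linarith))

theorem isLocalMin_centralSum_deriv (hf : Differentiable ℝ f) {y : ℝ}
    (hS : SuperadditiveOn (Ici 0) (centralDiff f y)) :
    IsLocalMin (centralSum (deriv f) y) 0 := by
  have hmin : IsMinOn (centralSum (deriv f) y) (Ici 0) 0 := by
    rw [← deriv_centralDiff hf]
    exact isMinOn_deriv_of_superadditiveOn_Ici
      (fun s ↦ (hasDerivAt_centralDiff hf y s).differentiableAt) hS (centralDiff_zero f y).ge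
  refine Eventually.of_forall fun s ↦ ?_
  rw [← centralSum_abs _ _ s]
  exact hmin (abs_nonneg s)

theorem third_deriv_nonneg_of_superadditiveOn_centralDiff (hf : Differentiable ℝ f)
    (hf' : Differentiable ℝ (deriv f)) (hf'' : Differentiable ℝ (deriv (deriv f))) {y : ℝ}
    (hS : SuperadditiveOn (Ici 0) (centralDiff f y)) : 0 ≤ deriv (deriv (deriv f)) y := by
  have hderiv : deriv (deriv (centralSum (deriv f) y)) 0 = 2 * deriv (deriv (deriv f)) y := by
    rw [deriv_centralSum hf', deriv_centralDiff hf'', centralSum, add_zero, sub_zero, two_mul]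
  have hnonneg := deriv_deriv_nonneg_of_isLocalMin (isLocalMin_centralSum_deriv hf hS)
    (hasDerivAt_centralSum hf' y 0).continuousAt
  linarith

end Central

/-- For a three times differentiable f : ℝ → ℝ, f''' ≥ 0 everywhere iff for
all x ≤ y ≤ z with y = (x+z)/2 and all 0 ≤ δ ≤ (z−x)/2 one has
f(x+δ) + f(y−2δ) + f(z+δ) ≥ f(x−δ) + f(y+2δ) + f(z−δ). -/
theorem third_deriv_nonneg_iff_apportionment
    (f : ℝ → ℝ)
    (hd1 : Differentiable ℝ f)
    (hd2 : Differentiable ℝ (deriv f))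
    (hd3 : Differentiable ℝ (deriv (deriv f))) :
    (∀ t : ℝ, 0 ≤ deriv (deriv (deriv f)) t) ↔
    (∀ x y z δ : ℝ, x ≤ y → y ≤ z → y = (x + z) / 2 → 0 ≤ δ → δ ≤ (z - x) / 2 →
      f (x - δ) + f (y + 2 * δ) + f (z - δ) ≤ f (x + δ) + f (y - 2 * δ) + f (z + δ)) := by
  rw [← superadditiveOn_centralDiff_iff_apportionment]
  constructor
  · intro hnonneg y
    have hmono : Monotone (deriv (deriv f)) := monotone_of_deriv_nonneg hd3 hnonneg
    exact superadditiveOn_Ici_of_convexOn (convexOn_Ici_centralDiff hd1 hd2 hmono y)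
      (centralDiff_zero f y).le
  · intro hS y
    exact third_deriv_nonneg_of_superadditiveOn_centralDiff hd1 hd2 hd3 (hS y)
end

section
/- Let k ≥ 3, let f : [0,∞) → ℝ ∪ {+∞} be lower semicontinuous, proper and convex with f(1) < ∞ and f(0) = 0, and let K ≥ 0 be such that {p ∈ Δ_k : ∑_{i=1}^k f(p_i) < K} is nonempty. Put M_{f,K} = {p ∈ Δ_k : ∑_{i=1}^k f(p_i) ≤ K} and U(y) = min_{p ∈ M_{f,K}} ⟨p, y⟩ for y ∈ ℝ^k. Then: (i) if f(1) ≤ K, U is ambiguity prudent; and (ii) if f(1) > K and the conjugate f*(x) = sup_{q ≥ 0}(qx − f(q)) is finite-valued and three times differentiable on ℝ with (f*)'''(x) ≥ 0 for all x, then U is ambiguity prudent. -/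
/-! For `l > 0` and `η`, the infimum of the Lagrangian
`⟨p, y⟩ + l (∑ f(pᵢ) - K) - η (∑ pᵢ - 1)` over `p` separates across the states and equals
`η - l (K + ∑ f*((η - yᵢ) / l))`. By strong duality `U y` is the maximum of these dual values, so
it is enough that every dual value increases when `y_A` is replaced by `y_B`. The affine map
`t ↦ (η - t) / l` swaps the roles of the two profiles, and what remains is a property of `h = f*`
alone: since `h'` is convex, `Ψ t = h (x + t) - h (x - t)` is convex on `[0, ∞)`, hence
`Ψ (L - d) + Ψ (2 d) ≤ Ψ (L + d) + Ψ 0`. If the multiplier `l` vanishes, or if `f(1) ≤ K`, then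
`U y` is just the smallest coordinate of `y`. -/

section ConvexReal

variable {s : Set ℝ} {h : ℝ → ℝ}

theorem convexOn_add_le_add (hh : ConvexOn ℝ s h) {a b p q : ℝ} (hp : p ∈ s) (hq : q ∈ s)
    (hpa : p ≤ a) (haq : a ≤ q) (hab : a + b = p + q) : h a + h b ≤ h p + h q := by
  have ha : a ∈ segment ℝ p q := by
    rw [segment_eq_Icc (hpa.trans haq)]
    exact ⟨hpa, haq⟩
  obtain ⟨μ, ν, hμ, hν, hμν, rfl⟩ := ha
  have hb : b = ν • p + μ • q := by
    simp only [smul_eq_mul] at hab ⊢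
    linear_combination hab - (p + q) * hμν
  have hha := hh.2 hp hq hμ hν hμν
  have hhb := hh.2 hp hq hν hμ (by rwa [add_comm])
  rw [← hb] at hhb
  calc h (μ • p + ν • q) + h b ≤ (μ • h p + ν • h q) + (ν • h p + μ • h q) := add_le_add hha hhb
    _ = (μ + ν) • (h p + h q) := by simp only [smul_eq_mul]; ring
    _ = h p + h q := by rw [hμν, one_smul]

theorem convexOn_Ici_reflection_sub (hd : Differentiable ℝ h)
    (hc : ConvexOn ℝ Set.univ (deriv h)) (x : ℝ) :
    ConvexOn ℝ (Set.Ici 0) fun t => h (x + t) - h (x - t) := by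
  have hderiv (t : ℝ) :
      HasDerivAt (fun t => h (x + t) - h (x - t)) (deriv h (x + t) + deriv h (x - t)) t := by
    have hadd := (hd (x + t)).hasDerivAt.comp_const_add x t
    have hsub := (hd (x - t)).hasDerivAt.comp_const_sub x t
    exact (hadd.sub hsub).congr_deriv (by ring)
  have hdiff : Differentiable ℝ fun t => h (x + t) - h (x - t) :=
    fun t => (hderiv t).differentiableAt
  refine MonotoneOn.convexOn_of_deriv (convex_Ici 0) hdiff.continuous.continuousOn
    hdiff.differentiableOn fun t ht t' _ htt' => ?_
  rw [interior_Ici, Set.mem_Ioi] at ht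
  rw [(hderiv t).deriv, (hderiv t').deriv, add_comm (deriv h (x + t')) (deriv h (x - t'))]
  exact convexOn_add_le_add hc (Set.mem_univ _) (Set.mem_univ _) (by linarith) (by linarith)
    (by ring)

theorem three_point_le_of_convexOn_deriv (hd : Differentiable ℝ h)
    (hc : ConvexOn ℝ Set.univ (deriv h)) (x : ℝ) {L d : ℝ} (hd0 : 0 ≤ d) (hdL : d ≤ L) :
    h (x - L - d) + h (x + 2 * d) + h (x + L - d) ≤
      h (x - L + d) + h (x - 2 * d) + h (x + L + d) := by
  have hΨ := convexOn_add_le_add (convexOn_Ici_reflection_sub hd hc x)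
    (a := L - d) (b := 2 * d) (p := 0) (q := L + d) (Set.mem_Ici.2 le_rfl)
    (Set.mem_Ici.2 (by linarith)) (by linarith) (by linarith) (by ring)
  rw [show x + L + d = x + (L + d) by ring, show x + L - d = x + (L - d) by ring,
    show x - L + d = x - (L - d) by ring, show x - L - d = x - (L + d) by ring]
  simp only [add_zero, sub_zero, sub_self] at hΨ
  linarith

end ConvexReal

section PrudentShift

variable {ι : Type*} {y z : ι → ℝ}

/-- `z` arises from `y` as `y_B` does from `y_A` in the definition of ambiguity prudence: on three
states with equally spaced reference levels `x - L`, `x`, `x + L`, the perturbation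
`(-d, 2 d, -d)` is replaced by `(d, -2 d, d)`. The order of the remaining states is left free. -/
def PrudentShift (y z : ι → ℝ) : Prop :=
  ∃ (ω₁ ω₂ ω₃ : ι) (x L d : ℝ), (ω₁ ≠ ω₂ ∧ ω₁ ≠ ω₃ ∧ ω₂ ≠ ω₃) ∧ 0 ≤ d ∧ d ≤ L ∧
    (y ω₁ = x - L - d ∧ y ω₂ = x + 2 * d ∧ y ω₃ = x + L - d) ∧
    (z ω₁ = x - L + d ∧ z ω₂ = x - 2 * d ∧ z ω₃ = x + L + d) ∧
    ∀ ω, ω ≠ ω₁ → ω ≠ ω₂ → ω ≠ ω₃ → z ω = y ω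

namespace PrudentShift

theorem nontrivial (hyz : PrudentShift y z) : Nontrivial ι := by
  obtain ⟨ω₁, ω₂, -, -, -, -, ⟨h₁₂, -⟩, -⟩ := hyz
  exact ⟨ω₁, ω₂, h₁₂⟩

theorem forall_le (hyz : PrudentShift y z) {u : ℝ} (hu : ∀ i, u ≤ y i) (i : ι) : u ≤ z i := by
  obtain ⟨ω₁, ω₂, ω₃, x, L, d, -, hd, hdL, ⟨hy₁, -, -⟩, ⟨hz₁, hz₂, hz₃⟩, hrest⟩ := hyz
  have hu₁ : u ≤ x - L - d := hy₁ ▸ hu ω₁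
  by_cases h₁ : i = ω₁
  · rw [h₁, hz₁]; linarith
  by_cases h₂ : i = ω₂
  · rw [h₂, hz₂]; linarith
  by_cases h₃ : i = ω₃
  · rw [h₃, hz₃]; linarith
  exact hrest i h₁ h₂ h₃ ▸ hu i

theorem reflect (hyz : PrudentShift y z) (η : ℝ) {l : ℝ} (hl : 0 < l) :
    PrudentShift (fun i => (η - z i) / l) (fun i => (η - y i) / l) := by
  obtain ⟨ω₁, ω₂, ω₃, x, L, d, ⟨h₁₂, h₁₃, h₂₃⟩, hd, hdL, ⟨hy₁, hy₂, hy₃⟩, ⟨hz₁, hz₂, hz₃⟩,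
    hrest⟩ := hyz
  refine ⟨ω₃, ω₂, ω₁, (η - x) / l, L / l, d / l, ⟨h₂₃.symm, h₁₃.symm, h₁₂.symm⟩, by positivity,
    by gcongr, ⟨?_, ?_, ?_⟩, ⟨?_, ?_, ?_⟩, fun ω h₃ h₂ h₁ => ?_⟩
  · simp only [hz₃]; ring
  · simp only [hz₂]; ring
  · simp only [hz₁]; ring
  · simp only [hy₃]; ring
  · simp only [hy₂]; ring
  · simp only [hy₁]; ring
  · simp only [hrest ω h₁ h₂ h₃]

theorem sum_comp_le [Fintype ι] (hyz : PrudentShift y z) {h : ℝ → ℝ} (hd : Differentiable ℝ h)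
    (hc : ConvexOn ℝ Set.univ (deriv h)) : ∑ i, h (y i) ≤ ∑ i, h (z i) := by
  classical
  obtain ⟨ω₁, ω₂, ω₃, x, L, d, ⟨h₁₂, h₁₃, h₂₃⟩, hd0, hdL, ⟨hy₁, hy₂, hy₃⟩, ⟨hz₁, hz₂, hz₃⟩,
    hrest⟩ := hyz
  have hsplit : ∑ i, (h (z i) - h (y i)) =
      (h (z ω₁) - h (y ω₁)) + (h (z ω₂) - h (y ω₂)) + (h (z ω₃) - h (y ω₃)) := by
    rw [← Finset.sum_subset (Finset.subset_univ {ω₁, ω₂, ω₃}) fun i _ hi => ?_]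
    · rw [Finset.sum_insert (by simp [h₁₂, h₁₃]), Finset.sum_pair h₂₃, add_assoc]
    · simp only [Finset.mem_insert, Finset.mem_singleton, not_or] at hi
      rw [hrest i hi.1 hi.2.1 hi.2.2, sub_self]
  rw [← sub_nonneg, ← Finset.sum_sub_distrib, hsplit, hy₁, hy₂, hy₃, hz₁, hz₂, hz₃]
  linarith [three_point_le_of_convexOn_deriv hd hc x hd0 hdL]

end PrudentShift

/-- The worst-case expectation over the set of priors `M` does not decrease under prudent shifts.
It is described by its lower bounds, so that the minimum need not be attained. -/
def IsPrudent [Fintype ι] (M : Set (ι → ℝ)) : Prop :=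
  ∀ ⦃y z : ι → ℝ⦄, PrudentShift y z → ∀ ⦃u : ℝ⦄, (∀ p ∈ M, u ≤ p ⬝ᵥ y) → ∀ p ∈ M, u ≤ p ⬝ᵥ z

theorem IsPrudent.ambiguityPrudent {k : ℕ} {M : Set (Fin k → ℝ)} {U : (Fin k → ℝ) → ℝ}
    (hM : IsPrudent M) (hU : ∀ y, IsLeast ((· ⬝ᵥ y) '' M) (U y)) : AmbiguityPrudent U := by
  intro E ω₁ ω₂ ω₃ u₁ u₂ u₃ d y _ _ _ h₁₂ h₁₃ h₂₃ _ _ hspacing hd h3d _ _ _ _ _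
  set yA := Function.update (Function.update (Function.update y ω₁ (u₁ - d)) ω₂
    (u₂ + 2 * d)) ω₃ (u₃ - d) with hyA
  set yB := Function.update (Function.update (Function.update y ω₁ (u₁ + d)) ω₂
    (u₂ - 2 * d)) ω₃ (u₃ + d) with hyB
  have hshift : PrudentShift yA yB := by
    have hu₁ : u₁ = u₂ - (u₂ - u₁) := by ring
    have hu₃ : u₃ = u₂ + (u₂ - u₁) := by linarith
    refine ⟨ω₁, ω₂, ω₃, u₂, u₂ - u₁, d, ⟨h₁₂, h₁₃, h₂₃⟩, hd.le, by linarith, ?_, ?_,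
      fun ω h₁ h₂ h₃ => by simp [hyA, hyB, h₁, h₂, h₃]⟩
    · rw [← hu₁, ← hu₃]
      simp [hyA, h₁₂, h₁₃, h₂₃]
    · rw [← hu₁, ← hu₃]
      simp [hyB, h₁₂, h₁₃, h₂₃]
  obtain ⟨p, hp, hpU⟩ := (hU yB).1
  rw [ge_iff_le, ← hpU]
  exact hM hshift (fun q hq => (hU yA).2 ⟨q, hq, rfl⟩) p hp

theorem le_dotProduct_of_mem_stdSimplex [Fintype ι] {p : ι → ℝ} (hp : p ∈ stdSimplex ℝ ι) {u : ℝ}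
    (hu : ∀ i, u ≤ y i) : u ≤ p ⬝ᵥ y :=
  calc u = ∑ i, p i * u := by rw [← Finset.sum_mul, hp.2, one_mul]
    _ ≤ p ⬝ᵥ y := Finset.sum_le_sum fun i _ => mul_le_mul_of_nonneg_left (hu i) (hp.1 i)

theorem isPrudent_of_single_mem [Fintype ι] [DecidableEq ι] {M : Set (ι → ℝ)}
    (hM : M ⊆ stdSimplex ℝ ι) (hsingle : ∀ i, Pi.single i 1 ∈ M) : IsPrudent M := by
  intro y z hyz u hu p hp
  refine le_dotProduct_of_mem_stdSimplex (hM hp) (hyz.forall_le fun i => ?_)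
  simpa only [single_dotProduct, one_mul] using hu _ (hsingle i)

end PrudentShift

section LagrangeMultipliers

variable {E : Type*} [AddCommGroup E] [Module ℝ E] {C : Set E} {φ G : E → ℝ} {c u : ℝ}

theorem div_le_div_of_linear_constraint (hφ : ConvexOn ℝ C φ) (ℓ : E →ₗ[ℝ] ℝ)
    (hu : ∀ p ∈ C, ℓ p = c → u ≤ φ p) {p q : E} (hq : q ∈ C) (hqc : ℓ q < c) (hp : p ∈ C)
    (hpc : c < ℓ p) : (u - φ q) / (c - ℓ q) ≤ (φ p - u) / (ℓ p - c) := by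
  have hb0 : 0 < c - ℓ q := sub_pos.2 hqc
  have ha0 : 0 < ℓ p - c := sub_pos.2 hpc
  set a := ℓ p - c with ha
  set b := c - ℓ q with hb
  have hab : 0 < a + b := add_pos ha0 hb0
  have hmem := hφ.1 hq hp (by positivity : 0 ≤ a / (a + b)) (by positivity : 0 ≤ b / (a + b))
    (by field_simp)
  have hcross : ℓ ((a / (a + b)) • q + (b / (a + b)) • p) = c := by
    simp only [map_add, map_smul, smul_eq_mul]
    field_simp
    rw [ha, hb]
    ring
  have hle := (hu _ hmem hcross).trans ((convexOn_iff_div.1 hφ).2 hq hp ha0.le hb0.le hab)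
  have hscaled : u * (a + b) ≤ a * φ q + b * φ p := by
    rw [← le_div_iff₀ hab]
    exact hle.trans_eq (by simp only [smul_eq_mul]; ring)
  rw [div_le_div_iff₀ hb0 ha0]
  linarith

theorem exists_multiplier_of_linear_constraint (hφ : ConvexOn ℝ C φ) (ℓ : E →ₗ[ℝ] ℝ)
    (hlt : ∃ q ∈ C, ℓ q < c) (hgt : ∃ p ∈ C, c < ℓ p) (hu : ∀ p ∈ C, ℓ p = c → u ≤ φ p) :
    ∃ η : ℝ, ∀ p ∈ C, u + η * (ℓ p - c) ≤ φ p := by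
  obtain ⟨q₀, hq₀, hq₀c⟩ := hlt
  obtain ⟨p₀, hp₀, hp₀c⟩ := hgt
  obtain ⟨η, hηlower, hηupper⟩ := exists_between_of_forall_le
    (s := (fun q => (u - φ q) / (c - ℓ q)) '' {q ∈ C | ℓ q < c})
    (t := (fun p => (φ p - u) / (ℓ p - c)) '' {p ∈ C | c < ℓ p})
    ⟨_, q₀, ⟨hq₀, hq₀c⟩, rfl⟩ ⟨_, p₀, ⟨hp₀, hp₀c⟩, rfl⟩ (by
      rintro _ ⟨q, ⟨hq, hqc⟩, rfl⟩ _ ⟨p, ⟨hp, hpc⟩, rfl⟩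
      exact div_le_div_of_linear_constraint hφ ℓ hu hq hqc hp hpc)
  refine ⟨η, fun p hp => ?_⟩
  rcases lt_trichotomy (ℓ p) c with hpc | hpc | hpc
  · have := (div_le_iff₀ (sub_pos.2 hpc)).1 (hηlower ⟨p, ⟨hp, hpc⟩, rfl⟩)
    linarith
  · simpa [hpc] using hu p hp hpc
  · have := (le_div_iff₀ (sub_pos.2 hpc)).1 (hηupper ⟨p, ⟨hp, hpc⟩, rfl⟩)
    linarith

theorem exists_nonneg_multiplier_of_convex_constraint (hφ : ConvexOn ℝ C φ)
    (hG : ConvexOn ℝ C G) (hslater : ∃ p ∈ C, G p < 0) (hu : ∀ p ∈ C, G p ≤ 0 → u ≤ φ p) :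
    ∃ l : ℝ, 0 ≤ l ∧ ∀ p ∈ C, u ≤ φ p + l * G p := by
  obtain ⟨p₀, hp₀, hp₀G⟩ := hslater
  -- With a slack variable bounding `G`, the constraint becomes linear on the epigraph of `G`.
  have hφ' : ConvexOn ℝ {r : E × ℝ | r.1 ∈ C ∧ G r.1 ≤ r.2} (φ ∘ Prod.fst) :=
    (hφ.comp_linearMap (LinearMap.fst ℝ E ℝ)).subset (fun r hr => hr.1) hG.convex_epigraph
  obtain ⟨η, hη⟩ := exists_multiplier_of_linear_constraint (c := 0) (u := u) hφ'
    (LinearMap.snd ℝ E ℝ) ⟨(p₀, G p₀), ⟨hp₀, le_rfl⟩, hp₀G⟩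
    ⟨(p₀, 1), ⟨hp₀, hp₀G.le.trans zero_le_one⟩, one_pos⟩
    (by
      rintro ⟨p, t⟩ ⟨hp, hpt⟩ (rfl : t = 0)
      exact hu p hp hpt)
  have hη' : ∀ p ∈ C, ∀ t, G p ≤ t → u + η * t ≤ φ p := fun p hp t ht => by
    simpa using hη (p, t) ⟨hp, ht⟩
  have hη_nonpos : η ≤ 0 := by
    by_contra! hpos
    have hslack := hη' p₀ hp₀ ((|φ p₀ - u| + 1) / η) (hp₀G.le.trans (by positivity))
    rw [mul_div_cancel₀ _ hpos.ne'] at hslack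
    linarith [le_abs_self (φ p₀ - u)]
  exact ⟨-η, neg_nonneg.2 hη_nonpos, fun p hp => by linarith [hη' p hp (G p) le_rfl]⟩

theorem exists_lagrange_multipliers (hφ : ConvexOn ℝ C φ) (hG : ConvexOn ℝ C G)
    (ℓ : E →ₗ[ℝ] ℝ) (hlt : ∃ q ∈ C, ℓ q < c) (hgt : ∃ p ∈ C, c < ℓ p)
    (hslater : ∃ p ∈ C, ℓ p = c ∧ G p < 0) (hu : ∀ p ∈ C, ℓ p = c → G p ≤ 0 → u ≤ φ p) :
    ∃ l η : ℝ, 0 ≤ l ∧ ∀ p ∈ C, u ≤ φ p + l * G p - η * (ℓ p - c) := by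
  have hsub : C ∩ ℓ ⁻¹' {c} ⊆ C := Set.inter_subset_left
  have hconv : Convex ℝ (C ∩ ℓ ⁻¹' {c}) := hφ.1.inter ((convex_singleton c).linear_preimage ℓ)
  obtain ⟨p₀, hp₀, hp₀c, hp₀G⟩ := hslater
  obtain ⟨l, hl, hul⟩ := exists_nonneg_multiplier_of_convex_constraint (hφ.subset hsub hconv)
    (hG.subset hsub hconv) ⟨p₀, ⟨hp₀, hp₀c⟩, hp₀G⟩ fun p hp => hu p hp.1 hp.2
  obtain ⟨η, hη⟩ := exists_multiplier_of_linear_constraint (hφ.add (hG.smul hl)) ℓ hlt hgt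
    fun p hp hpc => hul p ⟨hp, hpc⟩
  exact ⟨l, η, hl, fun p hp => le_sub_iff_add_le.2 (hη p hp)⟩

end LagrangeMultipliers

open scoped Pointwise in
theorem isLUB_sum {ι α : Type*} [AddCommGroup α] [PartialOrder α] [IsOrderedAddMonoid α]
    {t : Finset ι} {S : ι → Set α} {b : ι → α} (hS : ∀ i ∈ t, IsLUB (S i) (b i)) :
    IsLUB (∑ i ∈ t, S i) (∑ i ∈ t, b i) := by
  classical
  induction t using Finset.induction_on with
  | empty => exact isLUB_singleton
  | insert i t hi ih =>
    rw [Finset.forall_mem_insert] at hS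
    rw [Finset.sum_insert hi, Finset.sum_insert hi]
    exact hS.1.add (ih hS.2)

section Duality

variable {ι : Type*} [Fintype ι] {D : Set ℝ} {g fs : ℝ → ℝ} {K l η u : ℝ} {y : ι → ℝ}

/-- `fs` is the convex conjugate of the function `g` with domain `D`; in particular the conjugate
is finite everywhere. -/
def IsConjugateOn (D : Set ℝ) (g fs : ℝ → ℝ) : Prop :=
  ∀ x : ℝ, IsLUB ((fun q => q * x - g q) '' D) (fs x)

/-- The set of priors `M_{g,K}`, where `g` is the finite part of an extended-valued penalty with
effective domain `D`. Nonnegativity of the priors is left to the choice of `D`. -/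
def levelSet (ι : Type*) [Fintype ι] (D : Set ℝ) (g : ℝ → ℝ) (K : ℝ) : Set (ι → ℝ) :=
  {p | (∀ i, p i ∈ D) ∧ ∑ i, p i = 1 ∧ ∑ i, g (p i) ≤ K}

/-- The Lagrangian of minimizing `⟨p, y⟩` over `levelSet ι D g K`, with multiplier `l` for the
bound `K` and `η` for the normalization of `p`. -/
def lagrangian (g : ℝ → ℝ) (K l η : ℝ) (y p : ι → ℝ) : ℝ :=
  p ⬝ᵥ y + l * (∑ i, g (p i) - K) - η * (∑ i, p i - 1)

/-- The dual function of the worst-case problem, written through the conjugate `fs` of the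
penalty. -/
noncomputable def dualValue (fs : ℝ → ℝ) (K l η : ℝ) (y : ι → ℝ) : ℝ :=
  η - l * (K + ∑ i, fs ((η - y i) / l))

theorem levelSet_subset_stdSimplex (hD : D ⊆ Set.Ici 0) : levelSet ι D g K ⊆ stdSimplex ℝ ι :=
  fun _ hp => ⟨fun i => hD (hp.1 i), hp.2.1⟩

theorem single_mem_levelSet [DecidableEq ι] (h0 : 0 ∈ D) (h1 : 1 ∈ D) (hg0 : g 0 = 0)
    (hg1 : g 1 ≤ K) (i : ι) : Pi.single i 1 ∈ levelSet ι D g K := by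
  refine ⟨fun j => ?_, (single_mem_stdSimplex ℝ i).2, ?_⟩
  · rcases eq_or_ne j i with rfl | hj
    · simpa using h1
    · simpa [hj] using h0
  · rw [Fintype.sum_eq_single i fun j hj => by simp [hj, hg0]]
    simpa using hg1

theorem lagrangian_le_dotProduct (hl : 0 ≤ l) {p : ι → ℝ} (hp : p ∈ levelSet ι D g K) :
    lagrangian g K l η y p ≤ p ⬝ᵥ y := by
  have hpenalty : l * (∑ i, g (p i) - K) ≤ 0 :=
    mul_nonpos_of_nonneg_of_nonpos hl (sub_nonpos.2 hp.2.2)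
  rw [lagrangian, hp.2.1]
  linarith

theorem lagrangian_single [DecidableEq ι] (i : ι) :
    lagrangian g K 0 η y (Pi.single i 1) = y i := by
  rw [lagrangian, (single_mem_stdSimplex ℝ i).2, single_dotProduct]
  ring

theorem lagrangian_eq (hl : l ≠ 0) (p : ι → ℝ) :
    lagrangian g K l η y p = η - l * (K + ∑ i, (p i * ((η - y i) / l) - g (p i))) := by
  have hlinear : l * ∑ i, p i * ((η - y i) / l) = η * ∑ i, p i - p ⬝ᵥ y := by
    rw [dotProduct, Finset.mul_sum, Finset.mul_sum, ← Finset.sum_sub_distrib]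
    refine Finset.sum_congr rfl fun i _ => ?_
    field_simp
  rw [lagrangian, Finset.sum_sub_distrib]
  linear_combination hlinear

theorem isGLB_lagrangian (hfs : IsConjugateOn D g fs) (hl : 0 < l) :
    IsGLB (lagrangian g K l η y '' Set.univ.pi fun _ => D) (dualValue fs K l η y) := by
  constructor
  · rintro _ ⟨p, hp, rfl⟩
    rw [lagrangian_eq hl.ne', dualValue]
    gcongr with i
    exact (hfs _).1 ⟨p i, hp i trivial, rfl⟩
  · intro b hb
    have hle : ∑ i, fs ((η - y i) / l) ≤ (η - b) / l - K := by
      refine (isLUB_sum fun i _ => hfs ((η - y i) / l)).2 fun v hv => ?_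
      obtain ⟨w, hw, rfl⟩ := (Set.mem_fintype_sum _ _).1 hv
      choose p hp hpw using hw
      have hbp := hb ⟨p, fun i _ => hp i, rfl⟩
      rw [lagrangian_eq hl.ne'] at hbp
      simp only [hpw] at hbp
      rw [le_sub_iff_add_le, le_div_iff₀ hl]
      linarith
    rw [le_sub_iff_add_le, le_div_iff₀ hl] at hle
    rw [dualValue]
    linarith

theorem exists_le_lagrangian [Nontrivial ι] (hg : ConvexOn ℝ D g) (h0 : 0 ∈ D) (h1 : 1 ∈ D)
    (hslater : ∃ p : ι → ℝ, (∀ i, p i ∈ D) ∧ ∑ i, p i = 1 ∧ ∑ i, g (p i) < K)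
    (hu : ∀ p ∈ levelSet ι D g K, u ≤ p ⬝ᵥ y) :
    ∃ l η : ℝ, 0 ≤ l ∧ ∀ p ∈ Set.univ.pi fun _ => D, u ≤ lagrangian g K l η y p := by
  have hC : Convex ℝ (Set.univ.pi fun _ : ι => D) := convex_pi fun _ _ => hg.1
  have hφ : ConvexOn ℝ (Set.univ.pi fun _ : ι => D) (· ⬝ᵥ y) :=
    ((dotProductBilin ℝ ℝ).flip y).convexOn hC
  have hG : ConvexOn ℝ (Set.univ.pi fun _ : ι => D) fun p => ∑ i, g (p i) - K := by
    refine ⟨hC, fun p hp q hq a b ha hb hab => ?_⟩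
    calc ∑ i, g (a * p i + b * q i) - K ≤ ∑ i, (a * g (p i) + b * g (q i)) - (a + b) * K := by
          rw [hab, one_mul]
          gcongr with i
          exact hg.2 (hp i trivial) (hq i trivial) ha hb hab
      _ = a * (∑ i, g (p i) - K) + b * (∑ i, g (q i) - K) := by
          rw [Finset.sum_add_distrib, ← Finset.mul_sum, ← Finset.mul_sum]; ring
  obtain ⟨p₀, hp₀, hp₀1, hp₀K⟩ := hslater
  simpa only [lagrangian, LinearMap.sum_apply, LinearMap.proj_apply] using
    exists_lagrange_multipliers hφ hG (∑ i, LinearMap.proj i) (c := 1) (u := u)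
      ⟨0, fun _ _ => h0, by simp⟩
      ⟨1, fun _ _ => h1, by simpa using Fintype.one_lt_card⟩
      ⟨p₀, fun i _ => hp₀ i, by simpa using hp₀1, sub_neg.2 hp₀K⟩
      fun p hp hp1 hpK => hu p ⟨fun i => hp i trivial, by simpa using hp1, sub_nonpos.1 hpK⟩

theorem forall_le_or_exists_le_dualValue [Nontrivial ι] (hg : ConvexOn ℝ D g) (h0 : 0 ∈ D)
    (h1 : 1 ∈ D) (hfs : IsConjugateOn D g fs)
    (hslater : ∃ p : ι → ℝ, (∀ i, p i ∈ D) ∧ ∑ i, p i = 1 ∧ ∑ i, g (p i) < K)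
    (hu : ∀ p ∈ levelSet ι D g K, u ≤ p ⬝ᵥ y) :
    (∀ i, u ≤ y i) ∨ ∃ l η : ℝ, 0 < l ∧ u ≤ dualValue fs K l η y := by
  classical
  obtain ⟨l, η, hl, hle⟩ := exists_le_lagrangian hg h0 h1 hslater hu
  rcases hl.eq_or_lt with rfl | hl
  · refine .inl fun i => ?_
    rw [← lagrangian_single (g := g) (K := K) (η := η) (y := y) i]
    refine hle _ fun j _ => ?_
    rcases eq_or_ne j i with rfl | hj
    · simpa using h1
    · simpa [hj] using h0
  · exact .inr ⟨l, η, hl, (isGLB_lagrangian hfs hl).2 (Set.forall_mem_image.2 hle)⟩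

theorem PrudentShift.dualValue_le {z : ι → ℝ} (hyz : PrudentShift y z)
    (hd : Differentiable ℝ fs) (hc : ConvexOn ℝ Set.univ (deriv fs)) (hl : 0 < l) :
    dualValue fs K l η y ≤ dualValue fs K l η z := by
  unfold dualValue
  gcongr η - l * (K + ?_)
  exact (hyz.reflect η hl).sum_comp_le hd hc

theorem isPrudent_levelSet (hD : D ⊆ Set.Ici 0) (hg : ConvexOn ℝ D g) (h0 : 0 ∈ D) (h1 : 1 ∈ D)
    (hfs : IsConjugateOn D g fs) (hd : Differentiable ℝ fs)
    (hc : ConvexOn ℝ Set.univ (deriv fs))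
    (hslater : ∃ p : ι → ℝ, (∀ i, p i ∈ D) ∧ ∑ i, p i = 1 ∧ ∑ i, g (p i) < K) :
    IsPrudent (levelSet ι D g K) := by
  intro y z hyz u hu p hp
  have := hyz.nontrivial
  rcases forall_le_or_exists_le_dualValue hg h0 h1 hfs hslater hu with hle | ⟨l, η, hl, hle⟩
  · exact le_dotProduct_of_mem_stdSimplex (levelSet_subset_stdSimplex hD hp) (hyz.forall_le hle)
  · calc u ≤ dualValue fs K l η y := hle
      _ ≤ dualValue fs K l η z := hyz.dualValue_le hd hc hl
      _ ≤ lagrangian g K l η z p :=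
        (isGLB_lagrangian hfs hl).1 ⟨p, fun i _ => hp.1 i, rfl⟩
      _ ≤ p ⬝ᵥ z := lagrangian_le_dotProduct hl.le hp

end Duality

section ExtendedReal

theorem ereal_sum_ne_top_iff {ι : Type*} {s : Finset ι} {F : ι → EReal}
    (hbot : ∀ i ∈ s, F i ≠ ⊥) : ∑ i ∈ s, F i ≠ ⊤ ↔ ∀ i ∈ s, F i ≠ ⊤ := by
  classical
  induction s using Finset.induction_on with
  | empty => simp
  | insert i t hi ih =>
    rw [Finset.forall_mem_insert] at hbot
    have hsum : ∑ j ∈ t, F j ≠ ⊥ := fun h => by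
      obtain ⟨j, hj, hFj⟩ := WithBot.sum_eq_bot_iff.1 h
      exact hbot.2 j hj hFj
    rw [Finset.sum_insert hi, Finset.forall_mem_insert, ← ih hbot.2,
      EReal.add_ne_top_iff_ne_top₂ hbot.1 hsum]

theorem ereal_sum_eq_coe_sum_toReal {ι : Type*} {s : Finset ι} {F : ι → EReal}
    (hbot : ∀ i ∈ s, F i ≠ ⊥) (htop : ∀ i ∈ s, F i ≠ ⊤) :
    ∑ i ∈ s, F i = ((∑ i ∈ s, (F i).toReal : ℝ) : EReal) := by
  classical
  induction s using Finset.induction_on with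
  | empty => simp
  | insert i t hi ih =>
    rw [Finset.forall_mem_insert] at hbot htop
    rw [Finset.sum_insert hi, Finset.sum_insert hi, ih hbot.2 htop.2, EReal.coe_add,
      EReal.coe_toReal htop.1 hbot.1]

variable {f : ℝ → EReal}

/-- The effective domain of a penalty on `[0, ∞)`. The value `⊥` is excluded separately, by
properness. -/
def effDomain (f : ℝ → EReal) : Set ℝ := {q | 0 ≤ q ∧ f q ≠ ⊤}

theorem coe_toReal_of_mem_effDomain (hproper : ∀ x : ℝ, 0 ≤ x → f x ≠ ⊥) {q : ℝ}
    (hq : q ∈ effDomain f) : ((f q).toReal : EReal) = f q :=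
  EReal.coe_toReal hq.2 (hproper q hq.1)

theorem convexOn_toReal_effDomain (hproper : ∀ x : ℝ, 0 ≤ x → f x ≠ ⊥)
    (hconv : ∀ x ∈ Set.Ici (0 : ℝ), ∀ y ∈ Set.Ici (0 : ℝ), ∀ a b : ℝ,
      0 ≤ a → 0 ≤ b → a + b = 1 →
      f (a * x + b * y) ≤ (a : EReal) * f x + (b : EReal) * f y) :
    ConvexOn ℝ (effDomain f) fun q => (f q).toReal := by
  have hle : ∀ x ∈ effDomain f, ∀ y ∈ effDomain f, ∀ a b : ℝ, 0 ≤ a → 0 ≤ b → a + b = 1 →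
      f (a * x + b * y) ≤ ((a * (f x).toReal + b * (f y).toReal : ℝ) : EReal) := by
    intro x hx y hy a b ha hb hab
    rw [EReal.coe_add, EReal.coe_mul, EReal.coe_mul, coe_toReal_of_mem_effDomain hproper hx,
      coe_toReal_of_mem_effDomain hproper hy]
    exact hconv x hx.1 y hy.1 a b ha hb hab
  have hconvex : Convex ℝ (effDomain f) := fun x hx y hy a b ha hb hab =>
    ⟨add_nonneg (mul_nonneg ha hx.1) (mul_nonneg hb hy.1),
      ((hle x hx y hy a b ha hb hab).trans_lt (EReal.coe_lt_top _)).ne⟩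
  refine ⟨hconvex, fun x hx y hy a b ha hb hab => EReal.coe_le_coe_iff.1 ?_⟩
  rw [coe_toReal_of_mem_effDomain hproper (hconvex hx hy ha hb hab)]
  exact hle x hx y hy a b ha hb hab

theorem forall_mem_effDomain_of_sum_ne_top {ι : Type*} [Fintype ι]
    (hproper : ∀ x : ℝ, 0 ≤ x → f x ≠ ⊥) {p : ι → ℝ} (hp : ∀ i, 0 ≤ p i)
    (htop : ∑ i, f (p i) ≠ ⊤) (i : ι) : p i ∈ effDomain f :=
  ⟨hp i, (ereal_sum_ne_top_iff fun j _ => hproper _ (hp j)).1 htop i (Finset.mem_univ i)⟩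

theorem sum_eq_coe_of_forall_mem_effDomain {ι : Type*} [Fintype ι]
    (hproper : ∀ x : ℝ, 0 ≤ x → f x ≠ ⊥) {p : ι → ℝ} (hp : ∀ i, p i ∈ effDomain f) :
    ∑ i, f (p i) = ((∑ i, (f (p i)).toReal : ℝ) : EReal) :=
  ereal_sum_eq_coe_sum_toReal (fun i _ => hproper _ (hp i).1) fun i _ => (hp i).2

theorem levelSet_effDomain {ι : Type*} [Fintype ι] (hproper : ∀ x : ℝ, 0 ≤ x → f x ≠ ⊥)
    (K : ℝ) : levelSet ι (effDomain f) (fun q => (f q).toReal) K =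
      {p | p ∈ stdSimplex ℝ ι ∧ ∑ i, f (p i) ≤ (K : EReal)} := by
  ext p
  constructor
  · rintro ⟨hpD, hp1, hpK⟩
    refine ⟨⟨fun i => (hpD i).1, hp1⟩, ?_⟩
    rw [sum_eq_coe_of_forall_mem_effDomain hproper hpD]
    exact EReal.coe_le_coe_iff.2 hpK
  · rintro ⟨⟨hp0, hp1⟩, hpK⟩
    have hpD := forall_mem_effDomain_of_sum_ne_top hproper hp0
      (hpK.trans_lt (EReal.coe_lt_top K)).ne
    rw [sum_eq_coe_of_forall_mem_effDomain hproper hpD] at hpK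
    exact ⟨hpD, hp1, EReal.coe_le_coe_iff.1 hpK⟩

theorem image_effDomain_mul_sub_toReal (hproper : ∀ x : ℝ, 0 ≤ x → f x ≠ ⊥) (x : ℝ) :
    (fun q => q * x - (f q).toReal) '' effDomain f =
      {v : ℝ | ∃ q : ℝ, 0 ≤ q ∧ (v : EReal) = ((q * x : ℝ) : EReal) - f q} := by
  ext v
  constructor
  · rintro ⟨q, hq, rfl⟩
    exact ⟨q, hq.1, by rw [EReal.coe_sub, coe_toReal_of_mem_effDomain hproper hq]⟩
  · rintro ⟨q, hq, hv⟩
    have hqD : q ∈ effDomain f := ⟨hq, fun htop => by simp [htop] at hv⟩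
    rw [← coe_toReal_of_mem_effDomain hproper hqD, ← EReal.coe_sub, EReal.coe_eq_coe_iff] at hv
    exact ⟨q, hqD, hv.symm⟩

end ExtendedReal

theorem levelK_MEU_ambiguityPrudent_general
    {k : ℕ} (f : ℝ → EReal)
    (hproper : ∀ x : ℝ, 0 ≤ x → f x ≠ ⊥)
    (hconv : ∀ x ∈ Set.Ici (0 : ℝ), ∀ y ∈ Set.Ici (0 : ℝ), ∀ a b : ℝ,
      0 ≤ a → 0 ≤ b → a + b = 1 →
      f (a * x + b * y) ≤ (a : EReal) * f x + (b : EReal) * f y)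
    (hf1 : f 1 < ⊤) (hf0 : f 0 = 0) (K : ℝ)
    (hne : ∃ p ∈ stdSimplex ℝ (Fin k), (∑ i, f (p i)) < (K : EReal))
    (U : (Fin k → ℝ) → ℝ)
    (hU : ∀ y : Fin k → ℝ,
      IsLeast {v : ℝ | ∃ p ∈ stdSimplex ℝ (Fin k),
        (∑ i, f (p i)) ≤ (K : EReal) ∧ v = ∑ i, p i * y i} (U y)) :
    (f 1 ≤ (K : EReal) → AmbiguityPrudent U) ∧
    (∀ fs : ℝ → ℝ,
      (∀ x : ℝ, IsLUB
        {v : ℝ | ∃ q : ℝ, 0 ≤ q ∧ (v : EReal) = ((q * x : ℝ) : EReal) - f q} (fs x)) →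
      Differentiable ℝ fs →
      ConvexOn ℝ Set.univ (deriv fs) →
      AmbiguityPrudent U) := by
  have h0 : (0 : ℝ) ∈ effDomain f := ⟨le_rfl, by simp [hf0]⟩
  have h1 : (1 : ℝ) ∈ effDomain f := ⟨zero_le_one, hf1.ne⟩
  have hD : effDomain f ⊆ Set.Ici 0 := fun q hq => hq.1
  have hU' : ∀ y, IsLeast
      ((· ⬝ᵥ y) '' levelSet (Fin k) (effDomain f) (fun q => (f q).toReal) K) (U y) := by
    intro y
    convert hU y using 1
    ext v
    simp only [levelSet_effDomain hproper, Set.mem_image, Set.mem_ofPred_eq, and_assoc, dotProduct,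
      eq_comm (a := v)]
  refine ⟨fun hf1K => (isPrudent_of_single_mem (levelSet_subset_stdSimplex hD)
    (single_mem_levelSet h0 h1 (by simp [hf0]) ?_)).ambiguityPrudent hU',
    fun fs hfs hd hc => (isPrudent_levelSet hD (convexOn_toReal_effDomain hproper hconv) h0 h1
      (fun x => ?_) hd hc ?_).ambiguityPrudent hU'⟩
  · rwa [← EReal.coe_le_coe_iff, coe_toReal_of_mem_effDomain hproper h1]
  · rw [image_effDomain_mul_sub_toReal hproper]
    exact hfs x
  · obtain ⟨p, hp, hpK⟩ := hne
    have hpD := forall_mem_effDomain_of_sum_ne_top hproper hp.1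
      (hpK.trans (EReal.coe_lt_top K)).ne
    rw [sum_eq_coe_of_forall_mem_effDomain hproper hpD] at hpK
    exact ⟨p, hpD, hp.2, EReal.coe_lt_coe_iff.1 hpK⟩

/-- For k ≥ 3 and a lower semicontinuous, proper, convex
f : [0,∞) → ℝ ∪ {+∞} with f(1) < ∞, f(0) = 0, and K ≥ 0 such that
{p ∈ Δ_k : ∑ᵢ f(pᵢ) < K} ≠ ∅, let U(y) = min_{p ∈ M_{f,K}} ⟨p,y⟩ where
M_{f,K} = {p ∈ Δ_k : ∑ᵢ f(pᵢ) ≤ K}. Then (i) if f(1) ≤ K, U is ambiguity prudent;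
(ii) if f(1) > K and the conjugate f* is finite-valued, three times differentiable, and
(f*)''' ≥ 0, then U is ambiguity prudent. -/
theorem levelK_MEU_ambiguityPrudent
    {k : ℕ} (hk : 3 ≤ k)
    (f : ℝ → EReal)
    (hlsc : LowerSemicontinuousOn f (Set.Ici (0 : ℝ)))
    (hproper : ∀ x : ℝ, 0 ≤ x → f x ≠ ⊥)
    (hconv : ∀ x ∈ Set.Ici (0 : ℝ), ∀ y ∈ Set.Ici (0 : ℝ), ∀ a b : ℝ,
      0 ≤ a → 0 ≤ b → a + b = 1 →
      f (a * x + b * y) ≤ (a : EReal) * f x + (b : EReal) * f y)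
    (hf1 : f 1 < ⊤) (hf0 : f 0 = 0)
    (K : ℝ) (hK : 0 ≤ K)
    (hne : ∃ p ∈ stdSimplex ℝ (Fin k), (∑ i, f (p i)) < (K : EReal))
    (U : (Fin k → ℝ) → ℝ)
    (hU : ∀ y : Fin k → ℝ,
      IsLeast {v : ℝ | ∃ p ∈ stdSimplex ℝ (Fin k),
        (∑ i, f (p i)) ≤ (K : EReal) ∧ v = ∑ i, p i * y i} (U y)) :
    (f 1 ≤ (K : EReal) → AmbiguityPrudent U) ∧
    ((K : EReal) < f 1 →
      ∀ fs : ℝ → ℝ,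
        (∀ x : ℝ, IsLUB
          {v : ℝ | ∃ q : ℝ, 0 ≤ q ∧ (v : EReal) = ((q * x : ℝ) : EReal) - f q} (fs x)) →
        Differentiable ℝ fs →
        Differentiable ℝ (deriv fs) →
        Differentiable ℝ (deriv (deriv fs)) →
        (∀ x : ℝ, 0 ≤ deriv (deriv (deriv fs)) x) →
        AmbiguityPrudent U) := by
  obtain ⟨hpoint, hdual⟩ :=
    levelK_MEU_ambiguityPrudent_general f hproper hconv hf1 hf0 K hne U hU
  exact ⟨hpoint, fun _ fs hfs hd1 hd2 hd3 hd4 =>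
    hdual fs hfs hd1 (convexOn_univ_of_deriv2_nonneg hd2 hd3 hd4)⟩
end

section
/- Let k ≥ 3, ε ∈ [0,1] and α ∈ [0,1], and define the α-maxmin ε-contamination functional with uniform reference measure on {1,…,k} by U(y) = (1 − ε)·(1/k)∑_{i=1}^k y_i + ε·(α·min_{1 ≤ i ≤ k} y_i + (1 − α)·max_{1 ≤ i ≤ k} y_i) for y ∈ ℝ^k. Then U is ambiguity prudent. -/
/-!
Passing from the worse to the better profile moves the utilities at `ω₁, ω₂, ω₃` by
`2ū, -4ū, 2ū`, which preserves the mean. As the gaps between the three utilities exceed `3ū`, the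
new value at `ω₂` is above the old value at `ω₁`, and the old value at `ω₂` is below the new value
at `ω₃`. All other values weakly increase, so lowering `ω₂` cannot lower the minimum or the maximum.
-/

theorem sum_update_eq_sum_add_sub {ι M : Type*} [Fintype ι] [DecidableEq ι] [AddCommGroup M]
    (f : ι → M) (i : ι) (a : M) :
    ∑ m, Function.update f i a m = ∑ m, f m + (a - f i) := by
  rw [Finset.sum_update_of_mem (Finset.mem_univ i), Finset.sdiff_singleton_eq_erase,
    Finset.sum_erase_eq_sub (Finset.mem_univ i)]
  abel

/-- The butterfly shift: the profile `y` with `t • (1, -2, 1)` added at the states `(i, j, l)`. The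
two profiles that prudence compares are the shifts by `-ū` and by `ū`. It is encoded by nested
updates, as in `AmbiguityPrudent`, so it is the intended profile only for distinct `i, j, l`. -/
def butterfly {ι : Type*} [DecidableEq ι] (y : ι → ℝ) (i j l : ι) (t : ℝ) : ι → ℝ :=
  Function.update (Function.update (Function.update y i (y i + t)) j (y j - 2 * t)) l (y l + t)

namespace butterfly

variable {ι : Type*} [DecidableEq ι] {y : ι → ℝ} {i j l : ι} {s t : ℝ}

theorem apply_left (hij : i ≠ j) : butterfly y i j l t i = y i + t := by
  by_cases hil : i = l <;> simp [butterfly, hij, hil]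

theorem apply_mid (hjl : j ≠ l) : butterfly y i j l t j = y j - 2 * t := by
  simp [butterfly, hjl]

theorem apply_right : butterfly y i j l t l = y l + t := by
  simp [butterfly]

theorem apply_mono {m : ι} (hm : m ≠ j) (hst : s ≤ t) :
    butterfly y i j l s m ≤ butterfly y i j l t m := by
  simp only [butterfly, Function.update_apply, hm, if_false]
  split_ifs <;> linarith

theorem sum_eq [Fintype ι] (hij : i ≠ j) (hil : i ≠ l) (hjl : j ≠ l) :
    ∑ m, butterfly y i j l t m = ∑ m, y m := by
  simp only [butterfly, sum_update_eq_sum_add_sub, Function.update_of_ne hij.symm,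
    Function.update_of_ne hil.symm, Function.update_of_ne hjl.symm]
  ring

theorem iInf_mono [Finite ι] (hij : i ≠ j) (hjl : j ≠ l) (hst : s ≤ t)
    (hgap : s + 2 * t ≤ y j - y i) :
    ⨅ m, butterfly y i j l s m ≤ ⨅ m, butterfly y i j l t m := by
  have : Nonempty ι := ⟨i⟩
  refine ciInf_mono_of_forall_exists (Set.finite_range _).bddBelow fun m => ?_
  rcases eq_or_ne m j with rfl | hm
  · refine ⟨i, ?_⟩
    rw [apply_left hij, apply_mid hjl]
    linarith
  · exact ⟨m, apply_mono hm hst⟩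

theorem iSup_mono [Finite ι] (hjl : j ≠ l) (hst : s ≤ t) (hgap : -(2 * s + t) ≤ y l - y j) :
    ⨆ m, butterfly y i j l s m ≤ ⨆ m, butterfly y i j l t m := by
  have : Nonempty ι := ⟨l⟩
  refine ciSup_mono_of_forall_exists (Set.finite_range _).bddAbove fun m => ?_
  rcases eq_or_ne m j with rfl | hm
  · refine ⟨l, ?_⟩
    rw [apply_mid hjl, apply_right]
    linarith
  · exact ⟨m, apply_mono hm hst⟩

end butterfly

theorem epsilonContamination_ambiguityPrudent_general {k : ℕ} {U : (Fin k → ℝ) → ℝ}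
    (hU : ∀ x z : Fin k → ℝ, ∑ i, x i = ∑ i, z i → ⨅ i, x i ≤ ⨅ i, z i →
      ⨆ i, x i ≤ ⨆ i, z i → U x ≤ U z) :
    AmbiguityPrudent U := by
  rintro E ω₁ ω₂ ω₃ _ _ _ ub y - - - h₁₂ h₁₃ h₂₃ - - hspacing hub hgap rfl rfl rfl - -
  have hle : U (butterfly y ω₁ ω₂ ω₃ (-ub)) ≤ U (butterfly y ω₁ ω₂ ω₃ ub) := by
    apply hU
    · rw [butterfly.sum_eq h₁₂ h₁₃ h₂₃, butterfly.sum_eq h₁₂ h₁₃ h₂₃]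
    · exact butterfly.iInf_mono h₁₂ h₂₃ (by linarith) (by linarith)
    · exact butterfly.iSup_mono h₂₃ (by linarith) (by linarith)
  simpa only [butterfly, mul_neg, sub_neg_eq_add, ← sub_eq_add_neg] using hle

/-- For k ≥ 3, ε ∈ [0,1], α ∈ [0,1], the α-maxmin ε-contamination functional
U(y) = (1−ε)(1/k)∑ᵢ yᵢ + ε(α·minᵢ yᵢ + (1−α)·maxᵢ yᵢ) is ambiguity prudent. -/
theorem epsilonContamination_ambiguityPrudent
    {k : ℕ} (hk : 3 ≤ k)
    (ε α : ℝ) (hε : ε ∈ Set.Icc (0 : ℝ) 1) (hα : α ∈ Set.Icc (0 : ℝ) 1)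
    (U : (Fin k → ℝ) → ℝ)
    (hU : ∀ y : Fin k → ℝ,
      U y = (1 - ε) * ((1 / (k : ℝ)) * ∑ i, y i) +
        ε * (α * (⨅ i, y i) + (1 - α) * (⨆ i, y i))) :
    AmbiguityPrudent U := by
  refine epsilonContamination_ambiguityPrudent_general fun x z hsum hmin hmax => ?_
  rw [hU, hU, hsum]
  gcongr
  exacts [hε.1, hα.1, sub_nonneg.mpr hα.2]
end
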